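/- arXiv:2403.15259 — 3 statements merged into one kernel-verified Lean document; each statement's English description precedes it below -/
import Mathlib

section
/- Let E be a normal ordered Polish space and P a monotone Markov kernel on E such that the set M = {(x,y) : x ⪯ y} is achievable, and assume there exists a stationary distribution π for P. Then for every y ∈ E the law of Xₙʸ converges weakly to π as n → ∞. -/
open MeasureTheory ProbabilityTheory Filter Topology

/-- `μ` is *stochastically smaller* than `ν` (written `μ ⪯ ν` in the paper):
`μ I ≤ ν I` for every Borel increasing (upper) set `I`. -/
def StochDom {E : Type*} [MeasurableSpace E] [Preorder E] (μ ν : Measure E) : Prop :=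
  ∀ I : Set E, MeasurableSet I → IsUpperSet I → μ I ≤ ν I

/-- A Markov kernel `P` is *(stochastically) monotone* if for every bounded monotone
measurable `g : E → [0,1]` the map `x ↦ ∫ g dP(x)` is again monotone. -/
def MonotoneKernel {E : Type*} [MeasurableSpace E] [Preorder E] (P : Kernel E E) : Prop :=
  ∀ g : E → ℝ, Measurable g → Monotone g → (∀ x, g x ∈ Set.Icc (0 : ℝ) 1) →
    Monotone fun x => ∫ y, g y ∂(P x)

/-- The `n`-step transition kernel `P⁽ⁿ⁾` of a Markov kernel `P`;
`kpow P n x` is the law of `Xₙˣ`, the chain with kernel `P` started at `x`. -/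
noncomputable def kpow {E : Type*} [MeasurableSpace E] (P : Kernel E E) : ℕ → Kernel E E
  | 0 => Kernel.id
  | n + 1 => P.comp (kpow P n)

/-- The process `Z` on `(Ω, μ)` is a (possibly time-inhomogeneous) Markov chain with
one-step kernels `Q n`, expressed through finite-dimensional distributions: for every
bounded measurable cylinder functional `φ` of the past and every Borel set `A`,
`E[φ(Z₀,…,Zₙ) · 1_A(Z_{n+1})] = E[φ(Z₀,…,Zₙ) · (Q n)(Zₙ, A)]`. -/
def MCStep {Ω S : Type*} [MeasurableSpace Ω] [MeasurableSpace S]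
    (μ : Measure Ω) (Q : ℕ → Kernel S S) (Z : ℕ → Ω → S) : Prop :=
  ∀ (n : ℕ) (A : Set S), MeasurableSet A →
    ∀ φ : (Fin (n + 1) → S) → ℝ, Measurable φ → (∀ v, φ v ∈ Set.Icc (0 : ℝ) 1) →
      ∫ ω, φ (fun i => Z i.1 ω) * A.indicator (fun _ => (1 : ℝ)) (Z (n + 1) ω) ∂μ
        = ∫ ω, φ (fun i => Z i.1 ω) * ((Q n) (Z n ω) A).toReal ∂μ

/-- `X` on `(Ω, μ)` is a time-homogeneous Markov chain with kernel `P` started at `x`. -/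
def IsMChain {E Ω : Type*} [MeasurableSpace E] [MeasurableSpace Ω]
    (P : Kernel E E) (x : E) (μ : Measure Ω) (X : ℕ → Ω → E) : Prop :=
  IsProbabilityMeasure μ ∧ (∀ n, Measurable (X n)) ∧ (∀ᵐ ω ∂μ, X 0 ω = x) ∧
    MCStep μ (fun _ => P) X

/-- A *Markovian coupling* of two chains with kernel `P` started at `x` and `y`:
both coordinates are Markov chains with kernel `P` and the pair process is itself a
(possibly time-inhomogeneous) Markov chain. -/
def IsMarkovianCoupling {E Ω : Type*} [MeasurableSpace E] [MeasurableSpace Ω]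
    (P : Kernel E E) (x y : E) (μ : Measure Ω) (X Y : ℕ → Ω → E) : Prop :=
  IsMChain P x μ X ∧ IsMChain P y μ Y ∧
    ∃ Q : ℕ → Kernel (E × E) (E × E), (∀ n, IsMarkovKernel (Q n)) ∧
      MCStep μ Q fun n ω => (X n ω, Y n ω)

/-- A set `H ⊆ E × E` is *achievable* for the kernel `P` if for all `x, y` there is a
Markovian coupling of the chains started at `x` and `y` whose hitting time of `H`
is finite almost surely. -/
def Achievable {E : Type*} [MeasurableSpace E] (P : Kernel E E) (H : Set (E × E)) : Prop :=
  ∀ x y : E, ∃ (Ω : Type) (_ : MeasurableSpace Ω) (μ : Measure Ω) (X Y : ℕ → Ω → E),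
    IsMarkovianCoupling P x y μ X Y ∧ ∀ᵐ ω ∂μ, ∃ n, (X n ω, Y n ω) ∈ H

/-- Condition (BMC): every increasing sequence bounded above by some element converges. -/
def BMC (E : Type*) [Preorder E] [TopologicalSpace E] : Prop :=
  ∀ (x : ℕ → E) (y : E), Monotone x → (∀ n, x n ≤ y) → ∃ l, Tendsto x atTop (nhds l)

/-- The ordered metric space `E` is *normal*: there is a continuous `h : [0,∞) → [0,∞)`
with `h 0 = 0` such that `x ⪯ y ⪯ z` implies `d(x,y) ≤ h (d(x,z))`. -/
def NormalOrdered (E : Type*) [PseudoMetricSpace E] [Preorder E] : Prop :=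
  ∃ h : ℝ → ℝ, ContinuousOn h (Set.Ici 0) ∧ h 0 = 0 ∧ (∀ t ≥ (0 : ℝ), 0 ≤ h t) ∧
    ∀ x y z : E, x ≤ y → y ≤ z → dist x y ≤ h (dist x z)

/-- Condition (PR): there are `x₀ ⪯ y₀` such that the hitting times
`ν⁻ = min {n ≥ 1 : Xₙ^{x₀} ⪰ x₀}` and `ν⁺ = min {n ≥ 1 : Xₙ^{y₀} ⪯ y₀}`
have finite expectations. -/
def PRCond {E : Type*} [MeasurableSpace E] [Preorder E] (P : Kernel E E) : Prop :=
  ∃ x₀ y₀ : E, x₀ ≤ y₀ ∧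
    (∃ (Ω : Type) (_ : MeasurableSpace Ω) (μ : Measure Ω) (X : ℕ → Ω → E),
      IsMChain P x₀ μ X ∧ (∀ᵐ ω ∂μ, ∃ n, 1 ≤ n ∧ x₀ ≤ X n ω) ∧
      Integrable (fun ω => ((sInf {n : ℕ | 1 ≤ n ∧ x₀ ≤ X n ω} : ℕ) : ℝ)) μ) ∧
    (∃ (Ω : Type) (_ : MeasurableSpace Ω) (μ : Measure Ω) (X : ℕ → Ω → E),
      IsMChain P y₀ μ X ∧ (∀ᵐ ω ∂μ, ∃ n, 1 ≤ n ∧ X n ω ≤ y₀) ∧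
      Integrable (fun ω => ((sInf {n : ℕ | 1 ≤ n ∧ X n ω ≤ y₀} : ℕ) : ℝ)) μ)

lemma chain_step {E Ω : Type*} [MeasurableSpace E] [MeasurableSpace Ω]
    (P : Kernel E E) [IsMarkovKernel P] (x : E) (μ : Measure Ω) (X : ℕ → Ω → E)
    (h : IsMChain P x μ X) (n : ℕ) (S : Set (Fin (n + 1) → E)) (hS : MeasurableSet S) :
    (μ.restrict {ω | (fun i : Fin (n + 1) => X i.1 ω) ∈ S}).map (X (n + 1))
      = ((μ.restrict {ω | (fun i : Fin (n + 1) => X i.1 ω) ∈ S}).map (X n)).bind P := by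
  obtain ⟨hp, hX, h0, hs⟩ := h
  have hV : Measurable (fun ω => (fun i : Fin (n + 1) => X i.1 ω)) :=
    measurable_pi_lambda _ fun i => hX _
  have hB : MeasurableSet {ω | (fun i : Fin (n + 1) => X i.1 ω) ∈ S} := hV hS
  ext A hA
  rw [Measure.map_apply (hX _) hA, Measure.bind_apply hA P.measurable.aemeasurable,
    lintegral_map (P.measurable_coe hA) (hX n), Measure.restrict_apply (hX _ hA)]
  have key := hs n A hA (S.indicator (fun _ => (1 : ℝ))) (measurable_const.indicator hS) (by
    intro v
    by_cases hv : v ∈ S <;> simp [hv])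
  have e1 : (fun ω => S.indicator (fun _ => (1 : ℝ)) (fun i : Fin (n + 1) => X i.1 ω) *
      A.indicator (fun _ => (1 : ℝ)) (X (n + 1) ω)) =
      (X (n + 1) ⁻¹' A ∩ {ω | (fun i : Fin (n + 1) => X i.1 ω) ∈ S}).indicator (fun _ => (1 : ℝ)) := by
    ext ω
    by_cases h1 : (fun i : Fin (n + 1) => X i.1 ω) ∈ S <;> by_cases h2 : X (n + 1) ω ∈ A <;>
      simp [h1, h2]
  have e2 : (fun ω => S.indicator (fun _ => (1 : ℝ)) (fun i : Fin (n + 1) => X i.1 ω) *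
      ((P (X n ω)) A).toReal) =
      {ω | (fun i : Fin (n + 1) => X i.1 ω) ∈ S}.indicator (fun ω => ((P (X n ω)) A).toReal) := by
    ext ω
    by_cases h1 : (fun i : Fin (n + 1) => X i.1 ω) ∈ S <;> simp [h1]
  rw [e1, e2, integral_indicator (((hX _) hA).inter hB), integral_indicator hB] at key
  rw [integral_toReal] at key
  · simp only [integral_const, smul_eq_mul, mul_one, MeasurableSet.univ, measureReal_restrict_apply,
      Set.univ_inter] at key
    rw [Measure.real, ENNReal.toReal_eq_toReal_iff' (measure_ne_top _ _)] at key
    · exact key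
    · apply ne_of_lt
      calc _ ≤ ∫⁻ a in {ω | (fun i : Fin (n + 1) => X i.1 ω) ∈ S}, 1 ∂μ :=
            lintegral_mono fun a => prob_le_one
        _ < ⊤ := by simp
  · exact ((P.measurable_coe hA).comp (hX n)).aemeasurable
  · exact Eventually.of_forall fun a => measure_lt_top _ _

lemma chain_law {E Ω : Type*} [MeasurableSpace E] [MeasurableSpace Ω]
    (P : Kernel E E) [IsMarkovKernel P] (x : E) (μ : Measure Ω) (X : ℕ → Ω → E)
    (h : IsMChain P x μ X) (n : ℕ) : μ.map (X n) = kpow P n x := by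
  induction n with
  | zero =>
    obtain ⟨hp, hX, h0, hs⟩ := h
    rw [Measure.map_congr (g := fun _ => x) h0]
    simp [kpow, Kernel.id_apply]
  | succ n ih =>
    have := chain_step P x μ X h n Set.univ MeasurableSet.univ
    simp only [Set.mem_univ, Set.ofPred_true, Measure.restrict_univ] at this
    rw [this, ih]
    simp [kpow, Kernel.comp_apply]

instance kpow_markov {E : Type*} [MeasurableSpace E] (P : Kernel E E) [IsMarkovKernel P] (n : ℕ) :
    IsMarkovKernel (kpow P n) := by
  induction n with
  | zero => simp only [kpow]; infer_instance
  | succ n ih => simp only [kpow]; infer_instance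

/-- Optional stopping for a nonnegative (space-time) superharmonic function. -/
lemma hit_lemma {E Ω : Type*} [MeasurableSpace E] [MeasurableSpace Ω]
    (P : Kernel E E) [IsMarkovKernel P] (y : E) (μ : Measure Ω) (Y : ℕ → Ω → E)
    (h : IsMChain P y μ Y) (v : ℕ → E → ENNReal) (hv : ∀ k, Measurable (v k))
    (hsup : ∀ k z, ∫⁻ w, v (k + 1) w ∂(P z) ≤ v k z) (c : ENNReal)
    (hit : ∀ᵐ ω ∂μ, ∃ k, c ≤ v k (Y k ω)) : c ≤ v 0 y := by
  have hp := h.1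
  have hY := h.2.1
  have h0 := h.2.2.1
  let S : (k : ℕ) → Set (Fin (k + 1) → E) := fun k => {u | ∀ i : Fin (k + 1), v i.1 (u i) < c}
  have hS : ∀ k, MeasurableSet (S k) := by
    intro k
    have : S k = ⋂ i : Fin (k + 1), {u | v i.1 (u i) < c} := by ext; simp [S]
    rw [this]
    exact MeasurableSet.iInter fun i =>
      measurableSet_lt ((hv i.1).comp (measurable_pi_apply i)) measurable_const
  let A : ℕ → Set Ω := fun k => {ω | (fun i : Fin (k + 1) => Y i.1 ω) ∈ S k}
  have hA : ∀ k, MeasurableSet (A k) := fun k =>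
    (measurable_pi_lambda _ fun i : Fin (k + 1) => hY i.1) (hS k)
  have memA : ∀ k ω, ω ∈ A k ↔ ∀ i ≤ k, v i (Y i ω) < c := by
    intro k ω
    constructor
    · intro hω i hi
      exact hω ⟨i, by omega⟩
    · intro hω i
      exact hω i.1 (by omega)
  have sub : ∀ k, A (k + 1) ⊆ A k := fun k ω hω =>
    (memA _ _).2 fun i hi => (memA _ _).1 hω i (by omega)
  have anti : Antitone A := antitone_nat_of_succ_le sub
  have claim : ∀ k, ∫⁻ ω in A k, v k (Y k ω) ∂μ + c * μ (A k)ᶜ ≤ v 0 y := by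
    intro k
    induction k with
    | zero =>
      have e : ∫⁻ ω, v 0 (Y 0 ω) ∂μ = v 0 y := by
        rw [lintegral_congr_ae (g := fun _ => v 0 y) (h0.mono fun ω hω => by simp [hω])]
        simp
      rw [← e, ← lintegral_add_compl (μ := μ) (fun ω => v 0 (Y 0 ω)) (hA 0)]
      refine add_le_add le_rfl ?_
      rw [← setLIntegral_const]
      refine setLIntegral_mono' (hA 0).compl ?_
      intro ω hω
      by_contra hcon
      apply hω
      rw [memA]
      intro i hi
      obtain rfl : i = 0 := by omega
      exact not_le.1 hcon
    | succ k ih =>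
      refine le_trans ?_ ih
      have st := chain_step P y μ Y h k (S k) (hS k)
      have e1 : ∫⁻ ω in A k, v (k + 1) (Y (k + 1) ω) ∂μ ≤ ∫⁻ ω in A k, v k (Y k ω) ∂μ := by
        rw [← lintegral_map (hv (k + 1)) (hY (k + 1)), st,
          Measure.lintegral_bind P.measurable.aemeasurable (hv (k+1)).aemeasurable,
          lintegral_map ((hv (k+1)).lintegral_kernel) (hY k)]
        exact lintegral_mono fun ω => hsup _ _
      have e2 : ∫⁻ ω in A (k + 1), v (k + 1) (Y (k + 1) ω) ∂μ + c * μ (A k \ A (k + 1))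
          ≤ ∫⁻ ω in A k, v (k + 1) (Y (k + 1) ω) ∂μ := by
        rw [← lintegral_inter_add_sdiff _ (A k) (hA (k + 1)),
          Set.inter_eq_right.2 (sub k)]
        gcongr
        rw [← setLIntegral_const]
        refine setLIntegral_mono' ((hA k).diff (hA (k + 1))) ?_
        intro ω hω
        by_contra hcon
        apply hω.2
        rw [memA]
        intro i hi
        rcases Nat.lt_or_ge i (k + 1) with h1 | h1
        · exact (memA _ _).1 hω.1 i (by omega)
        · obtain rfl : i = k + 1 := by omega
          exact not_le.1 hcon
      have e3 : μ (A (k + 1))ᶜ ≤ μ (A k \ A (k + 1)) + μ (A k)ᶜ := by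
        refine le_trans (measure_mono ?_) (measure_union_le _ _)
        intro ω hω
        by_cases hk : ω ∈ A k
        · exact Or.inl ⟨hk, hω⟩
        · exact Or.inr hk
      calc _ ≤ ∫⁻ ω in A (k + 1), v (k + 1) (Y (k + 1) ω) ∂μ +
            c * (μ (A k \ A (k + 1)) + μ (A k)ᶜ) := by gcongr
        _ = (∫⁻ ω in A (k + 1), v (k + 1) (Y (k + 1) ω) ∂μ + c * μ (A k \ A (k + 1))) +
            c * μ (A k)ᶜ := by rw [mul_add, add_assoc]
        _ ≤ _ := by gcongr; exact e2.trans e1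
  have lim : Tendsto (fun k => μ (A k)ᶜ) atTop (𝓝 (μ (⋃ k, (A k)ᶜ))) :=
    tendsto_measure_iUnion_atTop fun i j hij => Set.compl_subset_compl.2 (anti hij)
  have one : μ (⋃ k, (A k)ᶜ) = 1 := by
    rw [← prob_compl_eq_zero_iff (MeasurableSet.iUnion fun k => (hA k).compl)]
    change ∀ᵐ ω ∂μ, _
    filter_upwards [hit] with ω hω
    obtain ⟨k, hk⟩ := hω
    refine Set.mem_iUnion.2 ⟨k, fun hc => absurd ((memA _ _).1 hc k le_rfl) (not_lt.2 hk)⟩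
  rw [one] at lim
  have lim2 := ENNReal.Tendsto.const_mul (a := c) lim (Or.inl one_ne_zero)
  rw [mul_one] at lim2
  exact le_of_tendsto' lim2 fun k => le_trans le_add_self (claim k)

lemma kpow_stat {E : Type*} [MeasurableSpace E] (P : Kernel E E) [IsMarkovKernel P]
    (π : Measure E) (hstat : π.bind (fun a => P a) = π) (k : ℕ) : π.bind (kpow P k) = π := by
  induction k with
  | zero => simp [kpow]
  | succ k ih =>
    simp only [kpow]
    rw [← Measure.comp_assoc, ih]
    exact hstat

lemma int01 {E : Type*} [MeasurableSpace E] (μ : Measure E) [IsFiniteMeasure μ] (g : E → ℝ)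
    (hg : Measurable g) (h : ∀ x, g x ∈ Set.Icc (0 : ℝ) 1) : Integrable g μ := by
  refine Integrable.of_bound hg.aestronglyMeasurable 1 (Eventually.of_forall fun x => ?_)
  rw [Real.norm_of_nonneg (h x).1]
  exact (h x).2

lemma fk {E : Type*} [MeasurableSpace E] (P : Kernel E E) [IsMarkovKernel P]
    (f : ℕ → E → ℝ) (hfm : ∀ m, Measurable (f m)) (hf : ∀ m x, f m x ∈ Set.Icc (0 : ℝ) 1)
    (hfP : ∀ m x, f (m + 1) x = ∫ z, f m z ∂(P x)) (k m : ℕ) (x : E) :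
    ∫ z, f m z ∂(kpow P k x) = f (m + k) x := by
  induction k generalizing m with
  | zero =>
    simp only [kpow, Kernel.id_apply, add_zero]
    exact integral_dirac' _ _ (hfm m).stronglyMeasurable
  | succ k ih =>
    simp only [kpow]
    rw [Kernel.integral_comp (int01 _ _ (hfm m) (hf m))]
    simp_rw [← hfP]
    rw [ih]
    congr 1
    ring

lemma l2id {E : Type*} [MeasurableSpace E] (P : Kernel E E) [IsMarkovKernel P]
    (π : Measure E) [IsProbabilityMeasure π] (hstat : π.bind (fun a => P a) = π)
    (f : ℕ → E → ℝ) (hfm : ∀ m, Measurable (f m)) (hf : ∀ m x, f m x ∈ Set.Icc (0 : ℝ) 1)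
    (hfP : ∀ m x, f (m + 1) x = ∫ z, f m z ∂(P x)) (k m : ℕ) :
    ∫ p, (f m p.2 - f (m + k) p.1) ^ 2 ∂(π ⊗ₘ (kpow P k))
      = ∫ x, f m x ^ 2 ∂π - ∫ x, f (m + k) x ^ 2 ∂π := by
  have e : ∀ p : E × E, (f m p.2 - f (m + k) p.1) ^ 2
      = f m p.2 ^ 2 + f (m + k) p.1 ^ 2 - 2 * (f (m + k) p.1 * f m p.2) := fun p => by ring
  have m1 : Measurable fun p : E × E => f m p.2 := (hfm m).comp measurable_snd
  have m2 : Measurable fun p : E × E => f (m + k) p.1 := (hfm _).comp measurable_fst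
  have i1 : Integrable (fun p : E × E => f m p.2 ^ 2) (π ⊗ₘ (kpow P k)) :=
    int01 _ _ (m1.pow_const 2) fun p =>
      ⟨by positivity, pow_le_one₀ (hf _ _).1 (hf _ _).2⟩
  have i2 : Integrable (fun p : E × E => f (m + k) p.1 ^ 2) (π ⊗ₘ (kpow P k)) :=
    int01 _ _ (m2.pow_const 2) fun p =>
      ⟨by positivity, pow_le_one₀ (hf _ _).1 (hf _ _).2⟩
  have i3 : Integrable (fun p : E × E => f (m + k) p.1 * f m p.2) (π ⊗ₘ (kpow P k)) :=
    int01 _ _ (m2.mul m1) fun p =>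
      ⟨mul_nonneg (hf _ _).1 (hf _ _).1, mul_le_one₀ (hf _ _).2 (hf _ _).1 (hf _ _).2⟩
  have v1 : ∫ p, f m p.2 ^ 2 ∂(π ⊗ₘ (kpow P k)) = ∫ x, f m x ^ 2 ∂π := by
    have h2 : (π ⊗ₘ (kpow P k)).map Prod.snd = π := by
      rw [← Measure.snd, Measure.snd_compProd]
      exact kpow_stat P π hstat k
    conv_rhs => rw [← h2]
    rw [integral_map measurable_snd.aemeasurable ((hfm m).pow_const 2).aestronglyMeasurable]
  have v2 : ∫ p, f (m + k) p.1 ^ 2 ∂(π ⊗ₘ (kpow P k)) = ∫ x, f (m + k) x ^ 2 ∂π := by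
    have h2 : (π ⊗ₘ (kpow P k)).map Prod.fst = π := by
      rw [← Measure.fst, Measure.fst_compProd]
    conv_rhs => rw [← h2]
    rw [integral_map measurable_fst.aemeasurable ((hfm _).pow_const 2).aestronglyMeasurable]
  have v3 : ∫ p, f (m + k) p.1 * f m p.2 ∂(π ⊗ₘ (kpow P k)) = ∫ x, f (m + k) x ^ 2 ∂π := by
    rw [Measure.integral_compProd i3]
    refine integral_congr_ae (Eventually.of_forall fun x => ?_)
    simp only
    rw [integral_const_mul, fk P f hfm hf hfP]
    ring
  simp_rw [e]
  rw [integral_sub (f := fun p : E × E => f m p.2 ^ 2 + f (m + k) p.1 ^ 2) (i1.add i2)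
      (i3.const_mul 2), integral_add i1 i2, integral_const_mul, v1, v2, v3]
  ring

lemma ae_tendsto_of_sum {Ω : Type*} [MeasurableSpace Ω] (μ : Measure Ω) [IsFiniteMeasure μ]
    (F : ℕ → Ω → ℝ) (hF : ∀ j, Measurable (F j)) (hb : ∀ j ω, |F j ω| ≤ 1) (k : ℕ)
    (h : ∀ j ≥ k, ∫ ω, F j ω ^ 2 ∂μ ≤ (1 / 2) ^ j) :
    ∀ᵐ ω ∂μ, Tendsto (fun j => F j ω) atTop (𝓝 0) := by
  have hi : ∀ j, Integrable (fun ω => F j ω ^ 2) μ := fun j =>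
    int01 _ _ ((hF j).pow_const 2) fun ω => ⟨by positivity, by
      rw [← sq_abs]; exact pow_le_one₀ (abs_nonneg _) (hb _ _)⟩
  have hs : ∫⁻ ω, ∑' j, ENNReal.ofReal (F (j + k) ω ^ 2) ∂μ ≠ ⊤ := by
    rw [lintegral_tsum fun j => ((hF _).pow_const 2).ennreal_ofReal.aemeasurable]
    have : ∀ j, ∫⁻ ω, ENNReal.ofReal (F (j + k) ω ^ 2) ∂μ ≤ ENNReal.ofReal ((1 / 2) ^ j) := by
      intro j
      rw [← ofReal_integral_eq_lintegral_ofReal (hi _) (Eventually.of_forall fun ω => by positivity)]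
      refine ENNReal.ofReal_le_ofReal ((h _ (by omega)).trans ?_)
      exact pow_le_pow_of_le_one (by norm_num) (by norm_num) (by omega)
    refine ne_top_of_le_ne_top ?_ (ENNReal.tsum_le_tsum this)
    rw [← ENNReal.ofReal_tsum_of_nonneg (fun n => by positivity)
      (summable_geometric_of_lt_one (by norm_num) (by norm_num))]
    exact ENNReal.ofReal_ne_top
  have ha := ae_lt_top (Measurable.tsum fun j => ((hF (j+k)).pow_const 2).ennreal_ofReal) hs
  filter_upwards [ha] with ω hω
  have t := ENNReal.tendsto_atTop_zero_of_tsum_ne_top hω.ne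
  have t2 := (ENNReal.tendsto_toReal ENNReal.zero_ne_top).comp t
  simp only [ENNReal.toReal_zero] at t2
  have t3 : Tendsto (fun j => F (j + k) ω ^ 2) atTop (𝓝 0) := by
    refine t2.congr fun j => ?_
    simp [ENNReal.toReal_ofReal (sq_nonneg (F (j + k) ω))]
  have t4 := (Real.continuous_sqrt.tendsto 0).comp t3
  simp only [Real.sqrt_zero] at t4
  have t5 : Tendsto (fun j => |F (j + k) ω|) atTop (𝓝 0) := by
    refine t4.congr fun j => ?_
    simp [Real.sqrt_sq_eq_abs]
  exact (tendsto_add_atTop_iff_nat k).1 (tendsto_zero_iff_abs_tendsto_zero _ |>.2 t5)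

theorem core {E : Type*} [MeasurableSpace E] (P : Kernel E E) [IsMarkovKernel P]
    (π : Measure E) [IsProbabilityMeasure π] (hstat : π.bind (fun a => P a) = π)
    (f : ℕ → E → ℝ) (hfm : ∀ m, Measurable (f m)) (hf : ∀ m x, f m x ∈ Set.Icc (0 : ℝ) 1)
    (hfP : ∀ m x, f (m + 1) x = ∫ z, f m z ∂(P x))
    (hc : ∀ x y : E, ∃ (Ω : Type) (_ : MeasurableSpace Ω) (μ : Measure Ω) (X Y : ℕ → Ω → E),
      IsMChain P x μ X ∧ IsMChain P y μ Y ∧ ∀ᵐ ω ∂μ, ∃ n, ∀ m, f m (X n ω) ≤ f m (Y n ω))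
    (y : E) (ε : ℝ) (hε : 0 < ε) : ∀ᶠ m in atTop, ∫ z, f 0 z ∂π - ε < f m y := by
  by_contra hcon
  set c := ∫ z, f 0 z ∂π with hcdef
  have hfreq : ∃ᶠ m in atTop, f m y ≤ c - ε := by
    rw [Filter.not_eventually] at hcon
    exact hcon.mono fun m hm => not_lt.1 hm
  have hmean : ∀ m, ∫ z, f m z ∂π = c := by
    intro m
    have h2 : (π ⊗ₘ (kpow P m)).map Prod.snd = π := by
      rw [← Measure.snd, Measure.snd_compProd]
      exact kpow_stat P π hstat m
    rw [hcdef]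
    conv_rhs => rw [← h2]
    rw [integral_map measurable_snd.aemeasurable (hfm 0).aestronglyMeasurable,
      Measure.integral_compProd (f := fun p : E × E => f 0 p.2)
        (int01 _ _ ((hfm 0).comp measurable_snd) fun p => hf 0 p.2)]
    refine integral_congr_ae (Eventually.of_forall fun x => ?_)
    simp only
    rw [fk P f hfm hf hfP, zero_add]
  -- L2 norms
  let a : ℕ → ℝ := fun m => ∫ x, f m x ^ 2 ∂π
  have aanti : Antitone a := by
    refine antitone_nat_of_succ_le fun m => ?_
    have := l2id P π hstat f hfm hf hfP 1 m
    have h2 : 0 ≤ ∫ p, (f m p.2 - f (m + 1) p.1) ^ 2 ∂(π ⊗ₘ (kpow P 1)) :=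
      integral_nonneg fun p => by positivity
    simp only [a]
    linarith
  have abd : BddBelow (Set.range a) := ⟨0, by
    rintro _ ⟨m, rfl⟩
    exact integral_nonneg fun p => by positivity⟩
  have alim := tendsto_atTop_ciInf aanti abd
  set al := ⨅ i, a i
  have ale : ∀ m, al ≤ a m := fun m => ciInf_le abd m
  have hN : ∀ j : ℕ, ∃ N, (f N y ≤ c - ε) ∧ j ≤ N ∧ ∀ k ≤ j, a (N - k) - al ≤ (1 / 2) ^ j := by
    intro j
    have h1 : ∀ᶠ m in atTop, a m < al + (1 / 2) ^ j :=
      alim.eventually_lt_const (by linarith [pow_pos (by norm_num : (0:ℝ) < 1/2) j])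
    obtain ⟨M, hM⟩ := eventually_atTop.1 h1
    obtain ⟨N, hN1, hN2⟩ := (hfreq.and_eventually (eventually_ge_atTop (M + j))).exists
    exact ⟨N, hN1, by omega, fun k hk => by linarith [hM (N - k) (by omega)]⟩
  choose N hNy hNj hNa using hN
  let G : E → Prop := fun x => ∀ k, ∀ᵐ z ∂(kpow P k x),
    Tendsto (fun j => f (N j - k) z - f (N j) x) atTop (𝓝 0)
  have hG : ∀ᵐ x ∂π, G x := by
    rw [ae_all_iff]
    intro k
    refine Measure.ae_ae_of_ae_compProd
      (p := fun q : E × E => Tendsto (fun j => f (N j - k) q.2 - f (N j) q.1) atTop (𝓝 0)) ?_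
    refine ae_tendsto_of_sum _ (fun j (q : E × E) => f (N j - k) q.2 - f (N j) q.1)
      (fun j => ((hfm _).comp measurable_snd).sub ((hfm _).comp measurable_fst)) ?_ k ?_
    · intro j q
      have := hf (N j - k) q.2
      have := hf (N j) q.1
      simp only [Set.mem_Icc] at *
      rw [abs_le]
      constructor <;> linarith
    · intro j hj
      have := l2id P π hstat f hfm hf hfP k (N j - k)
      rw [Nat.sub_add_cancel (hj.le.trans (hNj j))] at this
      rw [this]
      have h1 := hNa j k hj
      have h2 := ale (N j)
      simp only [a] at h1 h2
      linarith
  have law : ∀ {x : E} {Ω : Type} {_ : MeasurableSpace Ω} {μ : Measure Ω} {X : ℕ → Ω → E},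
      IsMChain P x μ X → ∀ k {p : E → Prop}, (∀ᵐ z ∂(kpow P k x), p z) → ∀ᵐ ω ∂μ, p (X k ω) := by
    intro x Ω _ μ X hX k p hp
    rw [← chain_law P x μ X hX k] at hp
    exact ae_of_ae_map (hX.2.1 k).aemeasurable hp
  have one : ∀ x x', G x → G x' → ∀ δ > 0, ∀ᶠ j in atTop, f (N j) x - f (N j) x' < δ := by
    intro x x' hx hx' δ hδ
    obtain ⟨Ω, _, μ, X, Y, hX, hY, hh⟩ := hc x x'
    have := hX.1
    have b1 := ae_all_iff.2 fun k => law hX k (hx k)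
    have b2 := ae_all_iff.2 fun k => law hY k (hx' k)
    obtain ⟨ω, h1, h2, k, h3⟩ := (b1.and (b2.and hh)).exists
    have h4 := ((h2 k).sub (h1 k)).eventually_lt_const (u := δ) (by simpa using hδ)
    filter_upwards [h4] with j hj
    have := h3 (N j - k)
    linarith
  have two : ∀ x, G x → Tendsto (fun j => f (N j) x) atTop (𝓝 c) := by
    intro x hx
    have dc : Tendsto (fun j => ∫ z, (f (N j) x - f (N j) z) ∂π) atTop (𝓝 (∫ z, (0 : ℝ) ∂π)) := by
      refine tendsto_integral_of_dominated_convergence (fun _ => 1)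
        (fun j => (measurable_const.sub (hfm _)).aestronglyMeasurable) (integrable_const _) ?_ ?_
      · intro j
        refine Eventually.of_forall fun z => ?_
        have := hf (N j) z
        have := hf (N j) x
        simp only [Set.mem_Icc] at *
        rw [Real.norm_eq_abs, abs_le]
        constructor <;> linarith
      · filter_upwards [hG] with z hz
        rw [Metric.tendsto_nhds]
        intro δ hδ
        filter_upwards [one x z hx hz δ hδ, one z x hz hx δ hδ] with j h1 h2
        rw [Real.dist_eq, sub_zero, abs_lt]
        constructor <;> linarith
    simp only [integral_zero] at dc
    have e : ∀ j, ∫ z, (f (N j) x - f (N j) z) ∂π = f (N j) x - c := by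
      intro j
      rw [integral_sub (integrable_const _) (int01 _ _ (hfm _) (hf _)), hmean]
      simp
    simp_rw [e] at dc
    simpa using dc.add_const c
  have three : ∀ x, G x → ∀ k, ∀ᵐ z ∂(kpow P k x), Tendsto (fun j => f (N j - k) z) atTop (𝓝 c) := by
    intro x hx k
    filter_upwards [hx k] with z hz
    simpa using hz.add (two x hx)
  obtain ⟨x, hx⟩ := hG.exists
  obtain ⟨Ω, _, μ, X, Y, hX, hY, hh⟩ := hc x y
  let v : ℕ → E → ENNReal := fun k z => liminf (fun j => ENNReal.ofReal (f (N j - k) z)) atTop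
  have key : ENNReal.ofReal c ≤ v 0 y := by
    refine hit_lemma P y μ Y hY v ?_ ?_ _ ?_
    · exact fun k => Measurable.liminf fun j => (hfm _).ennreal_ofReal
    · intro k z
      refine (lintegral_liminf_le fun j => (hfm _).ennreal_ofReal).trans (le_of_eq ?_)
      refine liminf_congr ?_
      filter_upwards [eventually_ge_atTop (k + 1)] with j hj
      rw [← ofReal_integral_eq_lintegral_ofReal (int01 _ _ (hfm _) (hf _))
        (Eventually.of_forall fun z => (hf _ z).1), ← hfP]
      have := hNj j
      congr 3
      omega
    · have b1 := ae_all_iff.2 fun k => law hX k (three x hx k)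
      filter_upwards [b1, hh] with ω h1 h2
      obtain ⟨k, hk⟩ := h2
      refine ⟨k, ?_⟩
      have := (ENNReal.continuous_ofReal.tendsto c).comp (h1 k)
      rw [← this.liminf_eq]
      exact liminf_le_liminf (Eventually.of_forall fun j => ENNReal.ofReal_le_ofReal (hk _))
  have up : v 0 y ≤ ENNReal.ofReal (c - ε) := by
    refine (liminf_le_liminf (v := fun _ => ENNReal.ofReal (c - ε))
      (Eventually.of_forall fun j => ENNReal.ofReal_le_ofReal (hNy j))).trans ?_
    simp
  have h0 : 0 ≤ c - ε := (hf (N 0) y).1.trans (hNy 0)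
  have := (ENNReal.ofReal_le_ofReal_iff h0).1 (key.trans up)
  linarith

lemma upClosed {E : Type*} [MetricSpace E] [PartialOrder E] [OrderClosedTopology E] (K : Set E)
    (hK : IsCompact K) : IsClosed (upperClosure K : Set E) := by
  refine isClosed_of_closure_subset fun y hy => ?_
  obtain ⟨u, hu, hul⟩ := mem_closure_iff_seq_limit.1 hy
  choose a ha hau using hu
  obtain ⟨l, hl, φ, hφ, hlim⟩ := hK.tendsto_subseq ha
  exact ⟨l, hl, le_of_tendsto_of_tendsto' hlim (hul.comp hφ.tendsto_atTop) fun n => hau _⟩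

lemma loClosed {E : Type*} [MetricSpace E] [PartialOrder E] [OrderClosedTopology E] (K : Set E)
    (hK : IsCompact K) : IsClosed (lowerClosure K : Set E) := by
  refine isClosed_of_closure_subset fun y hy => ?_
  obtain ⟨u, hu, hul⟩ := mem_closure_iff_seq_limit.1 hy
  choose a ha hau using hu
  obtain ⟨l, hl, φ, hφ, hlim⟩ := hK.tendsto_subseq ha
  exact ⟨l, hl, le_of_tendsto_of_tendsto' (hul.comp hφ.tendsto_atTop) hlim fun n => hau _⟩

theorem mono_conv {E : Type*} [MeasurableSpace E] [PartialOrder E]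
    (P : Kernel E E) [IsMarkovKernel P] (hmono : MonotoneKernel P)
    (hach : Achievable P {p : E × E | p.1 ≤ p.2})
    (π : Measure E) [IsProbabilityMeasure π] (hstat : π.bind (fun a => P a) = π)
    (g : E → ℝ) (hg : Measurable g) (hgm : Monotone g) (hg1 : ∀ x, g x ∈ Set.Icc (0 : ℝ) 1)
    (y : E) : Tendsto (fun n => ∫ z, g z ∂(kpow P n y)) atTop (𝓝 (∫ z, g z ∂π)) := by
  let f : ℕ → E → ℝ := fun n => Nat.rec g (fun _ F x => ∫ z, F z ∂(P x)) n
  have hf0 : f 0 = g := rfl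
  have hfP : ∀ m x, f (m + 1) x = ∫ z, f m z ∂(P x) := fun m x => rfl
  have hall : ∀ m, Measurable (f m) ∧ Monotone (f m) ∧ ∀ x, f m x ∈ Set.Icc (0 : ℝ) 1 := by
    intro m
    induction m with
    | zero => exact ⟨hg, hgm, hg1⟩
    | succ m ih =>
      obtain ⟨h1, h2, h3⟩ := ih
      refine ⟨(h1.stronglyMeasurable.integral_kernel (κ := P)).measurable, hmono _ h1 h2 h3, fun x => ?_⟩
      rw [hfP]
      refine ⟨integral_nonneg fun z => (h3 z).1, ?_⟩
      calc ∫ z, f m z ∂(P x) ≤ ∫ z, (1 : ℝ) ∂(P x) :=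
            integral_mono (int01 _ _ h1 h3) (integrable_const _) fun z => (h3 z).2
        _ = 1 := by simp
  have e : ∀ n, ∫ z, g z ∂(kpow P n y) = f n y := by
    intro n
    have := fk P f (fun m => (hall m).1) (fun m => (hall m).2.2) hfP n 0 y
    rwa [zero_add] at this
  simp_rw [e]
  have lo := core P π hstat f (fun m => (hall m).1) (fun m => (hall m).2.2) hfP (by
    intro x y
    obtain ⟨Ω, _, μ, X, Y, ⟨hX, hY, _⟩, hh⟩ := hach x y
    refine ⟨Ω, _, μ, X, Y, hX, hY, ?_⟩
    filter_upwards [hh] with ω hω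
    obtain ⟨n, hn⟩ := hω
    exact ⟨n, fun m => (hall m).2.1 hn⟩) y
  have hi := core P π hstat (fun m x => 1 - f m x) (fun m => measurable_const.sub (hall m).1)
    (fun m x => by
      have := (hall m).2.2 x
      simp only [Set.mem_Icc] at *
      constructor <;> linarith)
    (fun m x => by
      rw [integral_sub (integrable_const _) (int01 _ _ (hall m).1 (hall m).2.2), ← hfP]
      simp) (by
    intro x y
    obtain ⟨Ω, _, μ, X, Y, ⟨hX, hY, _⟩, hh⟩ := hach y x
    refine ⟨Ω, _, μ, Y, X, hY, hX, ?_⟩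
    filter_upwards [hh] with ω hω
    obtain ⟨n, hn⟩ := hω
    exact ⟨n, fun m => sub_le_sub_left ((hall m).2.1 hn) 1⟩) y
  have e2 : ∫ z, (1 - f 0 z) ∂π = 1 - ∫ z, g z ∂π := by
    rw [integral_sub (integrable_const _) (int01 _ _ (hall 0).1 (hall 0).2.2), hf0]
    simp
  rw [Metric.tendsto_nhds]
  intro δ hδ
  filter_upwards [lo δ hδ, hi δ hδ] with n h1 h2
  rw [e2] at h2
  rw [hf0] at h1
  rw [Real.dist_eq, abs_lt]
  constructor <;> linarith

/-- Convergence on Borel upper sets implies weak convergence in a normal ordered Polish space. -/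
theorem weak_of_upper {E : Type*} [MetricSpace E] [PolishSpace E] [MeasurableSpace E] [BorelSpace E]
    [PartialOrder E] [OrderClosedTopology E] (hnorm : NormalOrdered E)
    (μ : ℕ → Measure E) [∀ n, IsProbabilityMeasure (μ n)] (π : Measure E) [IsProbabilityMeasure π]
    (h : ∀ I : Set E, MeasurableSet I → IsUpperSet I →
      Tendsto (fun n => (μ n).real I) atTop (𝓝 (π.real I)))
    (g : BoundedContinuousFunction E ℝ) :
    Tendsto (fun n => ∫ z, g z ∂(μ n)) atTop (𝓝 (∫ z, g z ∂π)) := by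
  let Cv : Set E → Prop := fun A => ∃ I J, IsClosed I ∧ IsClosed J ∧ IsUpperSet I ∧
    IsLowerSet J ∧ A = I ∩ J
  have cvm : ∀ A, Cv A → MeasurableSet A := by
    rintro A ⟨I, J, hI, hJ, -, -, rfl⟩
    exact hI.measurableSet.inter hJ.measurableSet
  have cvt : ∀ A, Cv A → Tendsto (fun n => (μ n).real A) atTop (𝓝 (π.real A)) := by
    rintro A ⟨I, J, hI, hJ, uI, lJ, rfl⟩
    have e : ∀ (ν : Measure E) [IsProbabilityMeasure ν],
        ν.real (I ∩ J) = ν.real I - ν.real (I ∩ Jᶜ) := by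
      intro ν _
      have := measureReal_inter_add_sdiff (μ := ν) (s := I) hJ.measurableSet
      rw [Set.sdiff_eq] at this
      linarith
    simp_rw [e]
    exact (h I hI.measurableSet uI).sub
      (h _ (hI.measurableSet.inter hJ.measurableSet.compl) (uI.inter lJ.compl))
  have cvi : ∀ A B, Cv A → Cv B → Cv (A ∩ B) := by
    rintro A B ⟨I, J, hI, hJ, uI, lJ, rfl⟩ ⟨I', J', hI', hJ', uI', lJ', rfl⟩
    exact ⟨I ∩ I', J ∩ J', hI.inter hI', hJ.inter hJ', uI.inter uI', lJ.inter lJ',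
      Set.inter_inter_inter_comm _ _ _ _⟩
  have fin : ∀ (t : Finset E) (D : E → Set E), (∀ i, Cv (D i)) →
      (∀ C, Cv C → Tendsto (fun n => (μ n).real (C ∩ ⋃ i ∈ t, D i)) atTop
        (𝓝 (π.real (C ∩ ⋃ i ∈ t, D i)))) := by
    classical
    intro t D hD
    induction t using Finset.induction_on with
    | empty => intro C hC; simp
    | insert a t ha ih =>
      intro C hC
      have hm : MeasurableSet (⋃ i ∈ t, D i) := t.measurableSet_biUnion fun i _ => cvm _ (hD i)
      have e : ∀ (ν : Measure E) [IsProbabilityMeasure ν],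
          ν.real (C ∩ ⋃ i ∈ insert a t, D i) = ν.real (C ∩ D a) + ν.real (C ∩ ⋃ i ∈ t, D i)
            - ν.real ((C ∩ D a) ∩ ⋃ i ∈ t, D i) := by
        intro ν _
        have := measureReal_union_add_inter (μ := ν) (s := C ∩ D a) ((cvm _ hC).inter hm)
        rw [Finset.set_biUnion_insert, Set.inter_union_distrib_left]
        have e3 : (C ∩ D a) ∩ (C ∩ ⋃ i ∈ t, D i) = (C ∩ D a) ∩ ⋃ i ∈ t, D i := by
          ext; simp only [Set.mem_inter_iff]; tauto
        rw [e3] at this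
        linarith
      simp_rw [e]
      exact ((cvt _ (cvi _ _ hC (hD a))).add (ih C hC)).sub (ih _ (cvi _ _ hC (hD a)))
  have cvu : Cv Set.univ := ⟨Set.univ, Set.univ, isClosed_univ, isClosed_univ, isUpperSet_univ,
    isLowerSet_univ, by simp⟩
  have open_le : ∀ U : Set E, IsOpen U → π U ≤ liminf (fun n => μ n U) atTop := by
    intro U hU
    refine le_of_forall_lt fun r hr => ?_
    obtain ⟨K, hKU, hK, hrK⟩ := hU.exists_lt_isCompact hr
    obtain ⟨H, hHc, hH0, -, hH⟩ := hnorm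
    have loc : ∀ p ∈ K, ∃ δ > 0, ∀ x y z, x ∈ Metric.closedBall p δ → z ∈ Metric.closedBall p δ →
        x ≤ y → y ≤ z → y ∈ U := by
      intro p hp
      obtain ⟨r, hr, hrU⟩ := Metric.isOpen_iff.1 hU p (hKU hp)
      have hc0 := (hHc 0 (Set.mem_Ici.2 le_rfl))
      obtain ⟨s, hs, hsH⟩ := Metric.continuousWithinAt_iff.1 hc0 (r / 2) (by linarith)
      refine ⟨min (s / 3) (r / 3), by positivity, ?_⟩
      intro x y z hx hz hxy hyz
      rw [Metric.mem_closedBall] at hx hz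
      apply hrU
      rw [Metric.mem_ball]
      have h1 : dist x z ≤ 2 * (s / 3) := by
        have := dist_triangle_right x z p
        have := min_le_left (s / 3) (r / 3)
        linarith
      have h2 := @hsH (dist x z) (Set.mem_Ici.2 dist_nonneg) (by
        rw [Real.dist_eq, sub_zero, abs_of_nonneg dist_nonneg]
        linarith)
      rw [hH0, Real.dist_eq, sub_zero] at h2
      have h3 := (hH x y z hxy hyz).trans_lt ((le_abs_self _).trans_lt h2)
      have h4 := dist_triangle_left y p x
      have := min_le_right (s / 3) (r / 3)
      linarith
    have loc' : ∀ p : E, ∃ δ > 0, p ∈ K → ∀ x y z, x ∈ Metric.closedBall p δ →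
        z ∈ Metric.closedBall p δ → x ≤ y → y ≤ z → y ∈ U := by
      intro p
      by_cases hp : p ∈ K
      · obtain ⟨δ, h1, h2⟩ := loc p hp
        exact ⟨δ, h1, fun _ => h2⟩
      · exact ⟨1, one_pos, fun h => absurd h hp⟩
    choose δ hδ hloc using loc'
    let B : E → Set E := fun p => K ∩ Metric.closedBall p (δ p)
    have hB : ∀ p, IsCompact (B p) := fun p => hK.inter_right Metric.isClosed_closedBall
    let D : E → Set E := fun p => (upperClosure (B p) : Set E) ∩ (lowerClosure (B p) : Set E)
    have hD : ∀ p, Cv (D p) := fun p =>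
      ⟨_, _, upClosed _ (hB p), loClosed _ (hB p), (upperClosure (B p)).upper,
        (lowerClosure (B p)).lower, rfl⟩
    obtain ⟨t, htK, hcov⟩ := hK.elim_nhds_subcover (fun p => Metric.closedBall p (δ p))
      fun p _ => Metric.closedBall_mem_nhds p (hδ p)
    have s1 : K ⊆ ⋃ i ∈ t, D i := by
      intro x hx
      obtain ⟨i, hi, hxi⟩ := Set.mem_iUnion₂.1 (hcov hx)
      exact Set.mem_iUnion₂.2 ⟨i, hi, subset_upperClosure ⟨hx, hxi⟩, subset_lowerClosure ⟨hx, hxi⟩⟩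
    have s2 : (⋃ i ∈ t, D i) ⊆ U := by
      intro y hy
      obtain ⟨i, hi, ⟨x, hx, hxy⟩, ⟨z, hz, hyz⟩⟩ := Set.mem_iUnion₂.1 hy
      exact hloc i (htK i hi) x y z hx.2 hz.2 hxy hyz
    have lim := fin t D hD _ cvu
    simp only [Set.univ_inter] at lim
    have lim2 : Tendsto (fun n => μ n (⋃ i ∈ t, D i)) atTop (𝓝 (π (⋃ i ∈ t, D i))) := by
      have := ENNReal.tendsto_ofReal lim
      simpa [Measure.real, ENNReal.ofReal_toReal (measure_ne_top _ _)] using this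
    calc r < π K := hrK
      _ ≤ π (⋃ i ∈ t, D i) := measure_mono s1
      _ = liminf (fun n => μ n (⋃ i ∈ t, D i)) atTop := lim2.liminf_eq.symm
      _ ≤ _ := liminf_le_liminf (Eventually.of_forall fun n => measure_mono s2)
  have := tendsto_of_forall_isOpen_le_liminf' (μ := (⟨π, inferInstance⟩ : ProbabilityMeasure E))
    (μs := fun n => (⟨μ n, inferInstance⟩ : ProbabilityMeasure E)) (L := atTop) open_le
  exact ProbabilityMeasure.tendsto_iff_forall_integral_tendsto.1 this g

/-- Theorem 3.4 iii: if `E` is in addition normal, `M` is achievable for the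
monotone kernel `P` and a stationary distribution `π` exists, then for every `y` the law
of `Xₙʸ` converges weakly to `π`. -/
theorem stmt9 {E : Type*} [MetricSpace E] [PolishSpace E] [MeasurableSpace E] [BorelSpace E]
    [PartialOrder E] [OrderClosedTopology E]
    (hnorm : NormalOrdered E)
    (P : Kernel E E) [IsMarkovKernel P] (hmono : MonotoneKernel P)
    (hach : Achievable P {p : E × E | p.1 ≤ p.2})
    (π : Measure E) [IsProbabilityMeasure π] (hstat : π.bind (fun a => P a) = π) :
    ∀ y : E, ∀ g : BoundedContinuousFunction E ℝ,
      Tendsto (fun n => ∫ z, g z ∂(kpow P n y)) atTop (nhds (∫ z, g z ∂π)) := by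
  intro y g
  refine weak_of_upper hnorm (fun n => kpow P n y) π ?_ g
  intro I hI uI
  have h := mono_conv P hmono hach π hstat (I.indicator fun _ => (1 : ℝ))
    (measurable_const.indicator hI) ?_ ?_ y
  · simpa [integral_indicator hI] using h
  · intro a b hab
    by_cases ha : a ∈ I
    · simp [ha, uI hab ha]
    · by_cases hb : b ∈ I <;> simp [ha, hb]
  · intro x
    by_cases hx : x ∈ I <;> simp [hx]
end

section
/- There exist an ordered Polish space E and a monotone Markov kernel P on E such that the set M = {(x,y) : x ⪯ y} is achievable and, for every x ∈ E, the family of laws of Xₙˣ, n ≥ 0, is tight, yet P admits no stationary distribution. -/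
open MeasureTheory ProbabilityTheory Filter Topology

namespace Stmt11

/-- The chain driven by the noise `ω` through the update map `F`, started at `s`. -/
def run {S : Type} (F : S → ℕ → S) (s : S) : ℕ → (ℕ → ℕ) → S
  | 0, _ => s
  | n + 1, ω => F (run F s n ω) (ω n)

lemma run_congr {S : Type} (F : S → ℕ → S) (s : S) (n : ℕ) (ω ω' : ℕ → ℕ)
    (h : ∀ i < n, ω i = ω' i) : run F s n ω = run F s n ω' := by
  induction n with
  | zero => rfl
  | succ n ih =>
    simp only [run]
    rw [ih (fun i hi => h i (by omega)), h n (by omega)]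

/-- The kernel associated with the update map `F` and noise law `ν`. -/
noncomputable def ker {S : Type} [MeasurableSpace S] [DiscreteMeasurableSpace S]
    (ν : Measure ℕ) (F : S → ℕ → S) : Kernel S S :=
  ⟨fun s => ν.map (F s), Measurable.of_discrete⟩

lemma ker_apply {S : Type} [MeasurableSpace S] [DiscreteMeasurableSpace S]
    (ν : Measure ℕ) (F : S → ℕ → S) (s : S) : ker ν F s = ν.map (F s) := rfl

instance {S : Type} [MeasurableSpace S] [DiscreteMeasurableSpace S]
    (ν : Measure ℕ) [IsProbabilityMeasure ν] (F : S → ℕ → S) : IsMarkovKernel (ker ν F) :=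
  ⟨fun s => by
    rw [ker_apply]
    exact Measure.isProbabilityMeasure_map Measurable.of_discrete.aemeasurable⟩

lemma run_meas {S : Type} [Countable S] [MeasurableSpace S] [DiscreteMeasurableSpace S]
    (F : S → ℕ → S) (s : S) (n : ℕ) : Measurable (run F s n) := by
  induction n with
  | zero => exact measurable_const
  | succ n ih =>
    have h : Measurable (fun p : S × ℕ => F p.1 p.2) := Measurable.of_discrete
    exact h.comp (ih.prodMk (measurable_pi_apply n))

lemma mcstep_run {S : Type} [Countable S] [MeasurableSpace S] [DiscreteMeasurableSpace S]
    (ν : Measure ℕ) [IsProbabilityMeasure ν] (F : S → ℕ → S) (s : S) :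
    MCStep (Measure.infinitePi fun _ : ℕ => ν) (fun _ => ker ν F) (run F s) := by
  intro n A hA φ hφ hb
  set μ := Measure.infinitePi fun _ : ℕ => ν with hμ
  set V : (ℕ → ℕ) → (Fin (n + 1) → S) := fun ω i => run F s i.1 ω with hV
  have hVm : Measurable V := measurable_pi_lambda _ fun i => run_meas F s i.1
  have hlast : ∀ ω, run F s n ω = V ω (Fin.last n) := fun ω => rfl
  -- independence of past and next innovation
  have hind0 : iIndepFun (fun (i : ℕ) (ω : ℕ → ℕ) => ω i) μ :=
    iIndepFun_infinitePi (P := fun _ : ℕ => ν) (X := fun _ x => x) (fun _ => measurable_id)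
  have hind1 := hind0.indepFun_finset (Finset.range n) {n} (by simp)
    (fun i => measurable_pi_apply i)
  have hind : IndepFun V (fun ω => ω n) μ := by
    let ext : ((Finset.range n) → ℕ) → (ℕ → ℕ) :=
      fun u i => if h : i ∈ Finset.range n then u ⟨i, h⟩ else 0
    have hext : Measurable ext := by
      refine measurable_pi_lambda _ fun i => ?_
      by_cases h : i ∈ Finset.range n
      · simp only [ext, h, dite_true]; exact measurable_pi_apply _
      · simp only [ext, h, dite_false]; exact measurable_const
    have hψ : Measurable (fun u : (({n} : Finset ℕ) → ℕ) => u ⟨n, by simp⟩) :=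
      measurable_pi_apply _
    have h2 := hind1.comp (hVm.comp hext) hψ
    convert h2 using 1
    swap
    · rfl
    funext ω i
    refine run_congr F s _ _ _ fun j hj => ?_
    have : j < n := by omega
    simp [ext, this]
  have hjoint : μ.map (fun ω => (V ω, ω n)) = (μ.map V).prod ν := by
    rw [(indepFun_iff_map_prod_eq_prod_map_map hVm.aemeasurable
      (measurable_pi_apply n).aemeasurable).1 hind]
    congr 1
    exact Measure.infinitePi_map_eval (fun _ : ℕ => ν) n
  have : IsProbabilityMeasure (μ.map V) := Measure.isProbabilityMeasure_map hVm.aemeasurable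
  let I : S × ℕ → ℝ := fun p => A.indicator (fun _ => (1 : ℝ)) (F p.1 p.2)
  let G : (Fin (n + 1) → S) × ℕ → ℝ := fun p => φ p.1 * I (p.1 (Fin.last n), p.2)
  have hI : Measurable I := Measurable.of_discrete
  have hG : Measurable G := (hφ.comp measurable_fst).mul
    (hI.comp (((measurable_pi_apply _).comp measurable_fst).prodMk measurable_snd))
  have hGint : Integrable G ((μ.map V).prod ν) := by
    refine Integrable.of_bound hG.aestronglyMeasurable 1 (ae_of_all _ fun p => ?_)
    have h1 := hb p.1
    have h2 : I (p.1 (Fin.last n), p.2) = 0 ∨ I (p.1 (Fin.last n), p.2) = 1 := by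
      simp only [I, Set.indicator]; split_ifs <;> simp
    simp only [G]
    rcases h2 with h2 | h2 <;> rw [h2] <;> simp [abs_of_nonneg h1.1, h1.2]
  have hinner : ∀ v : Fin (n + 1) → S, ∫ z, G (v, z) ∂ν
      = φ v * (ker ν F (v (Fin.last n)) A).toReal := by
    intro v
    simp only [G]
    rw [integral_const_mul]
    congr 1
    rw [ker_apply, Measure.map_apply Measurable.of_discrete hA]
    have h3 : (fun z => I (v (Fin.last n), z))
        = (F (v (Fin.last n)) ⁻¹' A).indicator (fun _ => (1 : ℝ)) := by
      funext z; rfl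
    rw [h3, integral_indicator_const _ (MeasurableSet.of_discrete)]
    simp [measureReal_def]
  have hk : Measurable fun x : S => (ker ν F x A).toReal := Measurable.of_discrete
  calc ∫ ω, φ (V ω) * A.indicator (fun _ => (1 : ℝ)) (run F s (n + 1) ω) ∂μ
      = ∫ ω, G (V ω, ω n) ∂μ := rfl
    _ = ∫ p, G p ∂(μ.map (fun ω => (V ω, ω n))) :=
        (integral_map (hVm.prodMk (measurable_pi_apply n)).aemeasurable
          hG.aestronglyMeasurable).symm
    _ = ∫ v, ∫ z, G (v, z) ∂ν ∂(μ.map V) := by rw [hjoint, integral_prod _ hGint]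
    _ = ∫ v, φ v * (ker ν F (v (Fin.last n)) A).toReal ∂(μ.map V) := by simp_rw [hinner]
    _ = ∫ ω, φ (V ω) * (ker ν F (run F s n ω) A).toReal ∂μ := by
        rw [integral_map hVm.aemeasurable]
        · rfl
        exact (hφ.mul (hk.comp (measurable_pi_apply _))).aestronglyMeasurable

/-- Noise exceeds any level almost surely. -/
lemma ae_exceeds (ν : Measure ℕ) [IsProbabilityMeasure ν] (N : ℕ) (hν : ν (Set.Iio N) < 1) :
    ∀ᵐ ω ∂(Measure.infinitePi fun _ : ℕ => ν), ∃ n, N ≤ ω n := by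
  rw [ae_iff]
  have hle : ∀ m : ℕ, (Measure.infinitePi fun _ : ℕ => ν) {ω | ¬ ∃ n, N ≤ ω n}
      ≤ ν (Set.Iio N) ^ m := by
    intro m
    calc _ ≤ (Measure.infinitePi fun _ : ℕ => ν)
          (Set.pi (Finset.range m) fun _ => Set.Iio N) := by
          refine measure_mono fun ω hω => ?_
          intro i _
          simp only [Set.mem_setOf_eq, not_exists, not_le] at hω
          exact hω i
      _ = _ := by
          rw [Measure.infinitePi_pi _ (fun _ _ => MeasurableSet.of_discrete)]; simp
  exact le_antisymm (ge_of_tendsto' (ENNReal.tendsto_pow_atTop_nhds_zero_of_lt_one hν) hle)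
    (zero_le)

/-- The trivial partial order. -/
abbrev trivOrder (E : Type) : PartialOrder E where
  le x y := x = y
  le_refl _ := rfl
  le_trans _ _ _ := Eq.trans
  le_antisymm _ _ h _ := h

/-- The law of the noise. -/
noncomputable def ν : Measure ℕ := geometricMeasure ⟨1 / 2, by norm_num, by norm_num⟩

instance : IsProbabilityMeasure ν := by unfold ν; infer_instance

lemma ν_Iio (N : ℕ) : ν (Set.Iio N) < 1 := by
  have h1 : ν {N} ≠ 0 := by
    unfold ν
    rw [geometricMeasure_singleton]
    · simp
      norm_num
    · intro h
      have := congrArg Subtype.val h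
      norm_num at this
  have h2 : ν {N} + ν (Set.Iio N) ≤ 1 := by
    rw [← measure_union (by simp) MeasurableSet.of_discrete]
    exact prob_le_one
  by_contra h
  push Not at h
  have h3 : ν (Set.Iio N) = 1 := le_antisymm prob_le_one h
  rw [h3] at h2
  have h4 : ν {N} + 1 ≤ 0 + 1 := by simpa using h2
  exact h1 (le_antisymm ((ENNReal.add_le_add_iff_right (by simp)).1 h4) (zero_le))

theorem main (E : Type) [MetricSpace E] [CompactSpace E] [MeasurableSpace E] [BorelSpace E]
    [Countable E] [Infinite E] :
    ∃ (_ : PartialOrder E) (_ : OrderClosedTopology E)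
      (P : Kernel E E) (_ : IsMarkovKernel P),
      MonotoneKernel P ∧ Achievable P {p : E × E | p.1 ≤ p.2} ∧
      (∀ x : E, ∀ ε : ENNReal, 0 < ε →
        ∃ K : Set E, IsCompact K ∧ ∀ n, (kpow P n x) Kᶜ ≤ ε) ∧
      ¬ ∃ π : Measure E, IsProbabilityMeasure π ∧ π.bind (fun a => P a) = π := by
  obtain ⟨den⟩ := nonempty_denumerable E
  let e : E ≃ ℕ := Denumerable.eqv E
  let f : E → ℕ → E := fun x z => e.symm (max (e x) z)
  letI := trivOrder E
  refine ⟨trivOrder E, ⟨isClosed_diagonal⟩, ker ν f, inferInstance, ?_, ?_, ?_, ?_⟩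
  · intro g _ _ _ x y hxy
    have hxy : x = y := hxy
    rw [hxy]
  · intro x y
    let F : E × E → ℕ → E × E := fun p z => (f p.1 z, f p.2 z)
    have hF : (run F (x, y)) = fun n ω => (run f x n ω, run f y n ω) := by
      funext n ω
      induction n with
      | zero => rfl
      | succ n ih => simp only [run]; rw [ih]
    refine ⟨ℕ → ℕ, inferInstance, Measure.infinitePi fun _ : ℕ => ν, run f x, run f y,
      ⟨⟨inferInstance, run_meas f x, ae_of_all _ fun _ => rfl, mcstep_run ν f x⟩,
       ⟨inferInstance, run_meas f y, ae_of_all _ fun _ => rfl, mcstep_run ν f y⟩,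
       fun _ => ker ν F, fun _ => inferInstance, ?_⟩, ?_⟩
    · rw [← hF]; exact mcstep_run ν F (x, y)
    · filter_upwards [ae_exceeds ν (max (e x) (e y)) (ν_Iio _)] with ω ⟨n, hn⟩
      have key : ∀ k, ∃ m, e (run f x k ω) = max (e x) m ∧ e (run f y k ω) = max (e y) m := by
        intro k
        induction k with
        | zero => exact ⟨0, by simp [run], by simp [run]⟩
        | succ k ih =>
          obtain ⟨m, h1, h2⟩ := ih
          refine ⟨max m (ω k), ?_, ?_⟩
          · simp only [run, f, Equiv.apply_symm_apply, h1, max_assoc]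
          · simp only [run, f, Equiv.apply_symm_apply, h2, max_assoc]
      obtain ⟨m, h1, h2⟩ := key n
      refine ⟨n + 1, ?_⟩
      change run f x (n + 1) ω = run f y (n + 1) ω
      simp only [run, f, h1, h2]
      congr 1
      omega
  · intro x ε _
    exact ⟨Set.univ, isCompact_univ, fun n => by simp⟩
  · rintro ⟨π, hπ, hst⟩
    have hz : ∀ N : ℕ, π {x | e x < N} = 0 := by
      intro N
      set B : Set E := {x | e x < N} with hB
      have h1 : π B = ν (Set.Iio N) * π B := by
        conv_lhs => rw [← hst]
        rw [Measure.bind_apply MeasurableSet.of_discrete (Kernel.measurable _).aemeasurable]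
        have h2 : ∀ x, ker ν f x B = B.indicator (fun _ => ν (Set.Iio N)) x := by
          intro x
          rw [ker_apply, Measure.map_apply Measurable.of_discrete MeasurableSet.of_discrete]
          by_cases hx : e x < N
          · rw [Set.indicator_of_mem (by exact hx)]
            congr 1
            ext z
            simp [hB, f, hx]
          · rw [Set.indicator_of_notMem (by exact hx)]
            have : f x ⁻¹' B = ∅ := by
              ext z
              simp [hB, f, hx]
            rw [this, measure_empty]
        simp_rw [h2]
        rw [lintegral_indicator_const MeasurableSet.of_discrete]
      by_contra h0
      have h3 : ν (Set.Iio N) * π B < 1 * π B :=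
        (ENNReal.mul_lt_mul_iff_left h0 (measure_ne_top _ _)).2 (ν_Iio N)
      rw [one_mul, ← h1] at h3
      exact lt_irrefl _ h3
    have hu : (Set.univ : Set E) = ⋃ N : ℕ, {x | e x < N} := by
      ext x
      simp only [Set.mem_univ, Set.mem_iUnion, Set.mem_setOf_eq, true_iff]
      exact ⟨e x + 1, Nat.lt_succ_self _⟩
    have : π Set.univ = 0 := by
      rw [hu]; exact measure_iUnion_null hz
    simp at this

/-- The space `{0} ∪ {1/n : n ≥ 1}`. -/
def sp : Set ℝ := insert 0 (Set.range fun n : ℕ => 1 / ((n : ℝ) + 1))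

lemma sp_compact : IsCompact sp :=
  tendsto_one_div_add_atTop_nhds_zero_nat.isCompact_insert_range

lemma sp_countable : sp.Countable := (Set.countable_range _).insert _

lemma sp_infinite : sp.Infinite := by
  refine Set.Infinite.mono (Set.subset_insert _ _) (Set.infinite_range_of_injective ?_)
  intro a b h
  simpa using h

end Stmt11

/-- Theorem 3.4 v: there exist an ordered Polish space `E` and a monotone
Markov kernel `P` on it such that `M = {(x,y) : x ⪯ y}` is achievable and all families of
laws `(Xₙˣ)ₙ` are tight, yet `P` admits no stationary distribution. -/
theorem stmt11 :
    ∃ (E : Type) (_ : MetricSpace E) (_ : PolishSpace E) (_ : MeasurableSpace E)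
      (_ : BorelSpace E) (_ : PartialOrder E) (_ : OrderClosedTopology E)
      (P : Kernel E E) (_ : IsMarkovKernel P),
      MonotoneKernel P ∧ Achievable P {p : E × E | p.1 ≤ p.2} ∧
      (∀ x : E, ∀ ε : ENNReal, 0 < ε →
        ∃ K : Set E, IsCompact K ∧ ∀ n, (kpow P n x) Kᶜ ≤ ε) ∧
      ¬ ∃ π : Measure E, IsProbabilityMeasure π ∧ π.bind (fun a => P a) = π := by
  haveI : CompactSpace Stmt11.sp := isCompact_iff_compactSpace.1 Stmt11.sp_compact
  haveI : Countable Stmt11.sp := Stmt11.sp_countable.to_subtype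
  haveI : Infinite Stmt11.sp := Stmt11.sp_infinite.to_subtype
  exact ⟨Stmt11.sp, inferInstance, inferInstance, inferInstance, inferInstance,
    Stmt11.main Stmt11.sp⟩
end

section
/- There exist an ordered Polish space E and a monotone Markov kernel P on E such that the set M = {(x,y) : x ⪯ y} is achievable and P admits a (necessarily unique) stationary distribution π, yet not all transition probabilities converge weakly to π; i.e., there exists y ∈ E such that the laws of Xₙʸ do not converge weakly to π. -/
open MeasureTheory ProbabilityTheory Filter Topology

namespace Counter

section RandomMap

set_option linter.unusedSectionVars false

variable {S B : Type} [MeasurableSpace S] [MeasurableSpace B]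

/-- Kernel of the random map `z ↦ F z b`, with `b ∼ ν`. -/
noncomputable def rmk (ν : Measure B) [IsProbabilityMeasure ν] (F : S → B → S)
    (hF : Measurable (Function.uncurry F)) : Kernel S S where
  toFun z := ν.map (F z)
  measurable' := by
    refine Measure.measurable_of_measurable_coe _ fun A hA => ?_
    have h1 : ∀ z, Measurable (F z) := fun z => hF.comp measurable_prodMk_left
    have : (fun z => ν.map (F z) A) = fun z => ν (Prod.mk z ⁻¹' (Function.uncurry F ⁻¹' A)) := by
      funext z
      rw [Measure.map_apply (h1 z) hA]
      rfl
    rw [this]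
    exact measurable_measure_prodMk_left (hF hA)

lemma rmk_apply (ν : Measure B) [IsProbabilityMeasure ν] (F : S → B → S)
    (hF : Measurable (Function.uncurry F)) (z : S) : rmk ν F hF z = ν.map (F z) := rfl

lemma measF {F : S → B → S} (hF : Measurable (Function.uncurry F)) (z : S) :
    Measurable (F z) := hF.comp measurable_prodMk_left

instance (ν : Measure B) [IsProbabilityMeasure ν] (F : S → B → S)
    (hF : Measurable (Function.uncurry F)) : IsMarkovKernel (rmk ν F hF) :=
  ⟨fun z => by
    rw [rmk_apply]
    exact Measure.isProbabilityMeasure_map (measF hF z).aemeasurable⟩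

lemma bind_rmk (ν : Measure B) [IsProbabilityMeasure ν] (F : S → B → S)
    (hF : Measurable (Function.uncurry F)) (π : Measure S) [IsProbabilityMeasure π] :
    π.bind (fun a => rmk ν F hF a) = (π.prod ν).map (Function.uncurry F) := by
  ext A hA
  rw [Measure.bind_apply hA (rmk ν F hF).measurable.aemeasurable, Measure.map_apply hF hA,
    Measure.prod_apply (hF hA)]
  refine lintegral_congr fun z => ?_
  rw [rmk_apply, Measure.map_apply (measF hF z) hA]
  rfl

/-- The process driven by i.i.d. noise. -/
def proc (F : S → B → S) (z : S) : ℕ → (ℕ → B) → S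
  | 0, _ => z
  | n + 1, ω => F (proc F z n ω) (ω n)

lemma proc_meas {F : S → B → S} (hF : Measurable (Function.uncurry F)) (z : S) (n : ℕ) :
    Measurable (proc F z n) := by
  induction n with
  | zero => exact measurable_const
  | succ n ih =>
    exact hF.comp (ih.prodMk (measurable_pi_apply n))

lemma proc_congr (F : S → B → S) (z : S) (n : ℕ) (ω ω' : ℕ → B) (h : ∀ i < n, ω i = ω' i) :
    proc F z n ω = proc F z n ω' := by
  induction n with
  | zero => rfl
  | succ n ih =>
    simp only [proc]
    rw [ih fun i hi => h i (by omega), h n (by omega)]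

lemma proc_MCStep [Inhabited B] (ν : Measure B) [IsProbabilityMeasure ν] (F : S → B → S)
    (hF : Measurable (Function.uncurry F)) (z : S) (K : Kernel S S)
    (hK : ∀ z, K z = ν.map (F z)) :
    MCStep (Measure.infinitePi fun _ : ℕ => ν) (fun _ => K) (proc F z) := by
  intro n A hA φ hφ hφ1
  set μ := Measure.infinitePi fun _ : ℕ => ν with hμ
  let past : (ℕ → B) → (Fin (n + 1) → S) := fun ω i => proc F z i.1 ω
  have hpast : Measurable past := measurable_pi_lambda _ fun i => proc_meas hF z i.1
  let ext : (↥(Finset.range n) → B) → (ℕ → B) := fun w j =>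
    if h : j ∈ Finset.range n then w ⟨j, h⟩ else default
  have hext : Measurable ext := by
    refine measurable_pi_lambda _ fun j => ?_
    by_cases h : j ∈ Finset.range n
    · simp only [ext, h, dif_pos]; exact measurable_pi_apply _
    · simp only [ext, h, dif_neg, not_false_eq_true]; exact measurable_const
  have hind0 : IndepFun (fun (ω : ℕ → B) (i : ↥(Finset.range n)) => ω i)
      (fun (ω : ℕ → B) (i : ↥({n} : Finset ℕ)) => ω i) μ := by
    have := (iIndepFun_infinitePi (P := fun _ : ℕ => ν) (X := fun _ b => b)
      (fun _ => measurable_id)).indepFun_finset (Finset.range n) {n} (by simp)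
      (fun i => measurable_pi_apply i)
    exact this
  have hind : IndepFun past (fun ω => ω n) μ := by
    have hev : Measurable (fun w : (↥({n} : Finset ℕ) → B) => w ⟨n, by simp⟩) :=
      measurable_pi_apply _
    have := hind0.comp (φ := past ∘ ext)
      (ψ := fun w : (↥({n} : Finset ℕ) → B) => w ⟨n, by simp⟩)
      (hpast.comp hext) hev
    have e : (past ∘ ext) ∘ (fun (ω : ℕ → B) (i : ↥(Finset.range n)) => ω i) = past := by
      funext ω i
      refine proc_congr F z i.1 _ _ fun j hj => ?_
      have : j ∈ Finset.range n := by have := i.2; simp; omega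
      simp only [ext, this, dif_pos]
    rw [e] at this
    exact this
  have hlaw := (indepFun_iff_map_prod_eq_prod_map_map hpast.aemeasurable
    (measurable_pi_apply n).aemeasurable).1 hind
  rw [hμ, Measure.infinitePi_map_eval, ← hμ] at hlaw
  have : IsProbabilityMeasure (μ.map past) := Measure.isProbabilityMeasure_map hpast.aemeasurable
  let H : (Fin (n + 1) → S) × B → ℝ := fun p =>
    φ p.1 * A.indicator (fun _ => (1 : ℝ)) (F (p.1 (Fin.last n)) p.2)
  have hH : Measurable H := by
    refine (hφ.comp measurable_fst).mul ?_
    refine (measurable_const.indicator hA).comp (hF.comp (Measurable.prodMk ?_ measurable_snd))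
    exact (measurable_pi_apply _).comp measurable_fst
  have hHb : ∀ p, ‖H p‖ ≤ 1 := by
    intro p
    have h1 := hφ1 p.1
    simp only [H, norm_mul, Real.norm_eq_abs, abs_of_nonneg h1.1]
    by_cases h : F (p.1 (Fin.last n)) p.2 ∈ A
    · simp [h, h1.2]
    · simp [h]
  have hHi : Integrable H ((μ.map past).prod ν) :=
    Integrable.of_bound hH.aestronglyMeasurable 1 (ae_of_all _ hHb)
  have e1 : ∫ ω, φ (fun i => proc F z i.1 ω) * A.indicator (fun _ => (1 : ℝ))
      (proc F z (n + 1) ω) ∂μ = ∫ ω, H (past ω, ω n) ∂μ := rfl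
  have e2 : ∫ ω, H (past ω, ω n) ∂μ = ∫ p, H p ∂((μ.map past).prod ν) := by
    rw [← hlaw, integral_map (hpast.prodMk (measurable_pi_apply n)).aemeasurable
      hH.aestronglyMeasurable]
  have e3 : ∫ p, H p ∂((μ.map past).prod ν) =
      ∫ v, φ v * (K (v (Fin.last n)) A).toReal ∂(μ.map past) := by
    rw [integral_prod _ hHi]
    refine integral_congr_ae (ae_of_all _ fun v => ?_)
    simp only [H]
    rw [integral_const_mul, hK, Measure.map_apply (measF hF _) hA]
    congr 1
    have : (fun b => A.indicator (fun _ => (1 : ℝ)) (F (v (Fin.last n)) b))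
      = (F (v (Fin.last n)) ⁻¹' A).indicator (fun _ => (1 : ℝ)) := by
      funext b; by_cases h : F (v (Fin.last n)) b ∈ A <;> simp [h]
    rw [this, integral_indicator (measF hF _ hA)]
    simp [measureReal_def]
  rw [e1, e2, e3, integral_map hpast.aemeasurable]
  · rfl
  · refine (hφ.mul ?_).aestronglyMeasurable
    exact ((K.measurable_coe hA).comp (measurable_pi_apply _)).ennreal_toReal

end RandomMap

/-! ### The concrete state space -/

/-- The state space `[0,1] × ℕ`; the level `0` plays the role of level `∞`. -/
def E : Type := unitInterval × ℕ

noncomputable instance : MetricSpace E := inferInstanceAs (MetricSpace (unitInterval × ℕ))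
instance : PolishSpace E := inferInstanceAs (PolishSpace (unitInterval × ℕ))
instance : MeasurableSpace E := inferInstanceAs (MeasurableSpace (unitInterval × ℕ))
instance : BorelSpace E := inferInstanceAs (BorelSpace (unitInterval × ℕ))

/-- Height of level `k`. -/
noncomputable def eps : ℕ → ℝ
  | 0 => 0
  | k + 1 => (1 / 4 : ℝ) ^ k

/-- Motion of the levels. -/
def stp : ℕ → ℕ
  | 0 => 0
  | k + 1 => k + 2

lemma eps_stp (k : ℕ) : eps (stp k) = eps k / 4 := by
  cases k with
  | zero => simp [eps, stp]
  | succ k => simp only [eps, stp, pow_succ]; ring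

lemma eps_nonneg (k : ℕ) : 0 ≤ eps k := by
  cases k with
  | zero => simp [eps]
  | succ k => simp only [eps]; positivity

lemma eps_le_one (k : ℕ) : eps k ≤ 1 := by
  cases k with
  | zero => simp [eps]
  | succ k => simp only [eps]; exact pow_le_one₀ (by norm_num) (by norm_num)

lemma eps_inj {k l : ℕ} (h : eps k = eps l) : k = l := by
  cases k with
  | zero =>
    cases l with
    | zero => rfl
    | succ l => simp only [eps] at h; exact absurd h.symm (by positivity)
  | succ k =>
    cases l with
    | zero => simp only [eps] at h; exact absurd h (by positivity)
    | succ l =>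
      simp only [eps] at h
      rw [pow_right_injective₀ (by norm_num : (0 : ℝ) < 1 / 4) (by norm_num) h]

/-- The cone order. -/
noncomputable instance : PartialOrder E where
  le x y := |eps x.2 - eps y.2| ≤ (y.1 : ℝ) - (x.1 : ℝ)
  le_refl x := by simp
  le_trans x y z hxy hyz := by
    have := abs_sub_le (eps x.2) (eps y.2) (eps z.2)
    change |eps x.2 - eps y.2| ≤ (y.1 : ℝ) - (x.1 : ℝ) at hxy
    change |eps y.2 - eps z.2| ≤ (z.1 : ℝ) - (y.1 : ℝ) at hyz
    linarith
  le_antisymm x y hxy hyx := by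
    change |eps x.2 - eps y.2| ≤ (y.1 : ℝ) - (x.1 : ℝ) at hxy
    change |eps y.2 - eps x.2| ≤ (x.1 : ℝ) - (y.1 : ℝ) at hyx
    have h1 := abs_nonneg (eps x.2 - eps y.2)
    have h2 := abs_nonneg (eps y.2 - eps x.2)
    have h3 : |eps x.2 - eps y.2| = 0 := by linarith
    have h4 : x.2 = y.2 := eps_inj (sub_eq_zero.1 (abs_eq_zero.1 h3))
    exact Prod.ext (Subtype.ext (by linarith)) h4

lemma le_iff (x y : E) : x ≤ y ↔ |eps x.2 - eps y.2| ≤ (y.1 : ℝ) - (x.1 : ℝ) := Iff.rfl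

lemma cont_fst : Continuous (fun x : E => x.1) := continuous_fst (X := unitInterval) (Y := ℕ)
lemma cont_snd : Continuous (fun x : E => x.2) := continuous_snd (X := unitInterval) (Y := ℕ)
lemma meas_fst : Measurable (fun x : E => x.1) := measurable_fst (α := unitInterval) (β := ℕ)
lemma meas_snd : Measurable (fun x : E => x.2) := measurable_snd (α := unitInterval) (β := ℕ)

lemma cont_eps : Continuous (fun x : E => eps x.2) :=
  (continuous_of_discreteTopology (f := eps)).comp cont_snd

lemma cont_val : Continuous (fun x : E => (x.1 : ℝ)) := continuous_subtype_val.comp cont_fst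

instance : OrderClosedTopology E where
  isClosed_le' := by
    refine isClosed_le (f := fun p : E × E => |eps p.1.2 - eps p.2.2|)
      (g := fun p : E × E => (p.2.1 : ℝ) - (p.1.1 : ℝ)) ?_ ?_
    · exact ((cont_eps.comp continuous_fst).sub (cont_eps.comp continuous_snd)).abs
    · exact (cont_val.comp continuous_snd).sub (cont_val.comp continuous_fst)

/-- Contraction of the interval. -/
noncomputable def ctr (s : unitInterval) (j : Fin 4) : unitInterval :=
  ⟨((s : ℝ) + (j : ℕ)) / 4, by
    have h1 := s.2.1
    have h2 := s.2.2
    have h3 : ((j : ℕ) : ℝ) ≤ 3 := by exact_mod_cast Nat.lt_succ_iff.1 j.2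
    have h4 : (0 : ℝ) ≤ ((j : ℕ) : ℝ) := Nat.cast_nonneg _
    constructor <;> linarith⟩

lemma ctr_coe (s : unitInterval) (j : Fin 4) : (ctr s j : ℝ) = ((s : ℝ) + (j : ℕ)) / 4 := rfl

lemma cont_ctr (j : Fin 4) : Continuous fun s => ctr s j :=
  Continuous.subtype_mk (by fun_prop) _

/-- The random map. -/
noncomputable def F (x : E) (j : Fin 4) : E := (ctr x.1 j, stp x.2)

lemma F_mono {x y : E} (h : x ≤ y) (j : Fin 4) : F x j ≤ F y j := by
  rw [le_iff] at *
  simp only [F, eps_stp, ctr_coe]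
  rw [← sub_div, abs_div, abs_of_pos (by norm_num : (0 : ℝ) < 4)]
  linarith

lemma cont_F (j : Fin 4) : Continuous fun x => F x j :=
  Continuous.prodMk (X := unitInterval) (Y := ℕ) ((cont_ctr j).comp cont_fst)
    ((continuous_of_discreteTopology (f := stp)).comp cont_snd)

lemma meas_F : Measurable (Function.uncurry F) :=
  measurable_from_prod_countable_left fun j => (cont_F j).measurable

/-- Reflected noise. -/
noncomputable def F' (x : E) (j : Fin 4) : E := F x (Fin.rev j)

lemma meas_F' : Measurable (Function.uncurry F') :=
  measurable_from_prod_countable_left fun j => (cont_F (Fin.rev j)).measurable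

/-- Uniform noise on four points. -/
noncomputable def nu : Measure (Fin 4) := (PMF.uniformOfFintype (Fin 4)).toMeasure

instance : IsProbabilityMeasure nu := by unfold nu; infer_instance

lemma integral_nu (h : Fin 4 → ℝ) : ∫ j, h j ∂nu = (1 / 4) * ∑ j, h j := by
  unfold nu
  rw [PMF.integral_eq_sum, Finset.mul_sum]
  refine Finset.sum_congr rfl fun j _ => ?_
  simp [PMF.uniformOfFintype_apply]

lemma nu_singleton (j : Fin 4) : nu {j} = 4⁻¹ := by
  unfold nu
  rw [PMF.toMeasure_apply_singleton _ _ (measurableSet_singleton j)]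
  simp

lemma nu_rev : nu.map Fin.rev = nu := by
  refine Measure.ext_of_singleton fun j => ?_
  rw [Measure.map_apply (measurable_of_finite _) (measurableSet_singleton j)]
  have : Fin.rev ⁻¹' {j} = {Fin.rev j} := by
    ext i; simp [Fin.rev_eq_iff]
  rw [this, nu_singleton, nu_singleton]

/-- The kernel. -/
noncomputable def P : Kernel E E := rmk nu F meas_F

instance : IsMarkovKernel P := by unfold P; infer_instance

lemma P_apply (x : E) : P x = nu.map (F x) := rfl

lemma P_apply' (x : E) : P x = nu.map (F' x) := by
  have : F' x = F x ∘ Fin.rev := rfl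
  rw [this, ← Measure.map_map (measF meas_F x) (measurable_of_finite _), nu_rev, P_apply]

lemma P_mono : MonotoneKernel P := by
  intro g hg hm _ x y hxy
  simp only [P_apply]
  rw [integral_map (measF meas_F x).aemeasurable hg.aestronglyMeasurable,
    integral_map (measF meas_F y).aemeasurable hg.aestronglyMeasurable, integral_nu, integral_nu]
  have : ∑ j, g (F x j) ≤ ∑ j, g (F y j) :=
    Finset.sum_le_sum fun j _ => hm (F_mono hxy j)
  linarith

/-! ### Achievability -/

/-- Coupled random map. -/
noncomputable def G (p : E × E) (j : Fin 4) : E × E := (F p.1 j, F' p.2 j)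

lemma meas_G : Measurable (Function.uncurry G) :=
  measurable_from_prod_countable_left fun j =>
    ((cont_F j).measurable.comp measurable_fst).prodMk
      ((cont_F (Fin.rev j)).measurable.comp measurable_snd)

lemma proc_G (x y : E) (n : ℕ) (ω : ℕ → Fin 4) :
    proc G (x, y) n ω = (proc F x n ω, proc F' y n ω) := by
  induction n with
  | zero => rfl
  | succ n ih => simp only [proc, ih]; rfl

lemma ae_hit : ∀ᵐ ω ∂(Measure.infinitePi fun _ : ℕ => nu), ∃ n, ω n = 0 := by
  rw [ae_iff]
  have hb : ∀ n : ℕ, (Measure.infinitePi fun _ : ℕ => nu) {ω | ¬ ∃ n, ω n = 0}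
      ≤ (3 / 4 : ENNReal) ^ n := by
    intro n
    have h0 : nu {0}ᶜ = 3 / 4 := by
      rw [prob_compl_eq_one_sub (measurableSet_singleton _), nu_singleton]
      refine (ENNReal.sub_eq_of_eq_add (by simp) ?_)
      rw [← one_div, ENNReal.div_add_div_same]
      norm_num
      exact (ENNReal.div_self (by norm_num) (by norm_num)).symm
    calc (Measure.infinitePi fun _ : ℕ => nu) {ω | ¬ ∃ n, ω n = 0}
        ≤ (Measure.infinitePi fun _ : ℕ => nu)
          ((Finset.range n : Set ℕ).pi fun _ => ({0}ᶜ : Set (Fin 4))) := by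
          refine measure_mono fun ω hω i _ => ?_
          simp only [Set.mem_ofPred_eq, not_exists] at hω
          simpa using hω i
      _ = (3 / 4 : ENNReal) ^ n := by
          rw [Measure.infinitePi_pi]
          · simp [h0]
          · intro i _; exact (measurableSet_singleton _).compl
  have ht : Tendsto (fun n : ℕ => (3 / 4 : ENNReal) ^ n) atTop (𝓝 0) := by
    refine ENNReal.tendsto_pow_atTop_nhds_zero_of_lt_one ?_
    rw [ENNReal.div_lt_iff] <;> norm_num
  exact le_antisymm (ge_of_tendsto' ht hb) bot_le

lemma hit_of (x y : E) (j : Fin 4) (hj : j = 0) : F x j ≤ F' y j := by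
  subst hj
  rw [le_iff]
  have hr : ((Fin.rev (0 : Fin 4) : Fin 4) : ℕ) = 3 := by decide
  simp only [F, F', eps_stp, ctr_coe, hr]
  have a1 := x.1.2.1
  have a2 := x.1.2.2
  have a3 := y.1.2.1
  have a4 := y.1.2.2
  have b1 := eps_nonneg x.2
  have b2 := eps_le_one x.2
  have b3 := eps_nonneg y.2
  have b4 := eps_le_one y.2
  have : ((0 : Fin 4) : ℕ) = 0 := rfl
  rw [this]
  push_cast
  rw [abs_le]
  constructor <;> linarith

lemma P_ach : Achievable P {p : E × E | p.1 ≤ p.2} := by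
  intro x y
  refine ⟨ℕ → Fin 4, inferInstance, Measure.infinitePi fun _ => nu, proc F x, proc F' y,
    ⟨⟨inferInstance, proc_meas meas_F x, ae_of_all _ fun _ => rfl,
      proc_MCStep nu F meas_F x P P_apply⟩,
     ⟨inferInstance, proc_meas meas_F' y, ae_of_all _ fun _ => rfl,
      proc_MCStep nu F' meas_F' y P P_apply'⟩,
     fun _ => rmk nu G meas_G, fun _ => inferInstance, ?_⟩, ?_⟩
  · have := proc_MCStep nu G meas_G (x, y) (rmk nu G meas_G) (fun _ => rfl)
    have e : proc G (x, y) = fun n ω => (proc F x n ω, proc F' y n ω) := by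
      funext n ω; exact proc_G x y n ω
    rwa [e] at this
  · filter_upwards [ae_hit] with ω ⟨n, hn⟩
    exact ⟨n + 1, hit_of _ _ _ hn⟩

/-! ### Stationarity -/

/-- Embedding at level zero. -/
def emb (s : unitInterval) : E := (s, 0)

lemma cont_emb : Continuous emb :=
  Continuous.prodMk (X := unitInterval) (Y := ℕ) continuous_id continuous_const

/-- Stationary law. -/
noncomputable def pi0 : Measure E := (volume : Measure unitInterval).map emb

instance : IsProbabilityMeasure pi0 :=
  Measure.isProbabilityMeasure_map cont_emb.measurable.aemeasurable

lemma vol_inv (g : unitInterval → ℝ) (hg : Continuous g) :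
    ∫ s, (1 / 4) * ∑ j, g (ctr s j) = ∫ s, g s := by
  let h : ℝ → ℝ := Set.IccExtend (zero_le_one' ℝ) g
  have hh : Continuous h := hg.Icc_extend'
  have hI : ∀ k : unitInterval → ℝ, ∀ k' : ℝ → ℝ, (∀ s : unitInterval, k s = k' s) →
      ∫ s, k s = ∫ r in (0 : ℝ)..1, k' r := by
    intro k k' hk
    rw [intervalIntegral.integral_of_le zero_le_one, ← integral_Icc_eq_integral_Ioc,
      ← integral_subtype measurableSet_Icc]
    exact integral_congr_ae (ae_of_all _ hk)
  have hgh : ∀ s : unitInterval, g s = h s := fun s => (Set.IccExtend_val _ g s).symm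
  rw [hI g h hgh, hI _ (fun r => (1 / 4) * ∑ j : Fin 4, h (r / 4 + (j : ℕ) / 4)) (fun s => by
    congr 1
    refine Finset.sum_congr rfl fun j _ => ?_
    rw [hgh, ctr_coe, add_div])]
  rw [intervalIntegral.integral_const_mul, intervalIntegral.integral_finsetSum]
  · simp only [intervalIntegral.integral_comp_div_add h (by norm_num : (4 : ℝ) ≠ 0)]
    rw [← Finset.smul_sum]
    have := intervalIntegral.sum_integral_adjacent_intervals (f := h) (μ := volume)
      (a := fun k : ℕ => (k : ℝ) / 4) (n := 4) (fun k _ => hh.intervalIntegrable _ _)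
    rw [Finset.sum_range] at this
    have e : ∀ j : Fin 4, ∫ x in (0 : ℝ) / 4 + ((j : ℕ) : ℝ) / 4..1 / 4 + ((j : ℕ) : ℝ) / 4, h x
        = ∫ x in ((j : ℕ) : ℝ) / 4..(((j : ℕ) + 1 : ℕ) : ℝ) / 4, h x := by
      intro j
      congr 1 <;> push_cast <;> ring
    simp only [e, this]
    norm_num
    ring
  · intro j _
    exact (hh.comp (by fun_prop)).intervalIntegrable _ _

lemma integral_stat (π : Measure E) [IsProbabilityMeasure π] (f : E → ℝ) (hf : Continuous f)
    (C : ℝ) (hC : ∀ x, ‖f x‖ ≤ C) :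
    ∫ z, f z ∂(π.bind fun a => P a) = ∫ z, (1 / 4) * ∑ j, f (F z j) ∂π := by
  unfold P
  rw [bind_rmk, integral_map meas_F.aemeasurable hf.aestronglyMeasurable, integral_prod]
  · refine integral_congr_ae (ae_of_all _ fun z => ?_)
    exact integral_nu _
  · exact Integrable.of_bound (hf.measurable.comp meas_F).aestronglyMeasurable C
      (ae_of_all _ fun _ => hC _)

lemma pi0_stat : pi0.bind (fun a => P a) = pi0 := by
  have : IsProbabilityMeasure (pi0.bind fun a => P a) := by
    unfold P
    rw [bind_rmk]
    exact Measure.isProbabilityMeasure_map meas_F.aemeasurable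
  refine ext_of_forall_integral_eq_of_IsFiniteMeasure fun f => ?_
  rw [integral_stat pi0 f f.continuous ‖f‖ f.norm_coe_le_norm]
  unfold pi0
  rw [integral_map cont_emb.measurable.aemeasurable f.continuous.aestronglyMeasurable,
    integral_map cont_emb.measurable.aemeasurable]
  · exact vol_inv _ (f.continuous.comp cont_emb)
  · refine Continuous.aestronglyMeasurable ?_
    exact continuous_const.mul (continuous_finsetSum _ fun j _ => f.continuous.comp (cont_F j))

/-! ### Uniqueness -/

lemma level_null (π : Measure E) (hs : π.bind (fun a => P a) = π) (k : ℕ) :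
    π {z | z.2 = k + 1} = 0 := by
  have hm : ∀ k : ℕ, MeasurableSet {z : E | z.2 = k} := fun k =>
    meas_snd (measurableSet_singleton k)
  have key : ∀ k : ℕ, π {z | z.2 = k} = ∫⁻ z, P z {w | w.2 = k} ∂π := by
    intro k
    conv_lhs => rw [← hs]
    rw [Measure.bind_apply (hm k) P.measurable.aemeasurable]
  have hP : ∀ (k : ℕ) (z : E), stp z.2 ≠ k → P z {w | w.2 = k} = 0 := by
    intro k z hz
    rw [P_apply, Measure.map_apply (measF meas_F z) (hm k)]
    have : F z ⁻¹' {w | w.2 = k} = ∅ := by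
      ext j; simp [F, hz]
    rw [this, measure_empty]
  induction k with
  | zero =>
    rw [key]
    have : ∀ z : E, P z {w | w.2 = 0 + 1} = 0 := fun z => hP _ _ (by
      cases z.2 <;> simp [stp])
    simp only [this, lintegral_zero]
  | succ k ih =>
    rw [key]
    rw [lintegral_eq_zero_iff (P.measurable_coe (hm _))]
    have : ∀ᵐ z ∂π, z.2 ≠ k + 1 := by
      rw [ae_iff]; simpa using ih
    filter_upwards [this] with z hz
    refine hP _ _ fun h => hz ?_
    cases h2 : z.2 with
    | zero => rw [h2] at h; simp [stp] at h
    | succ m => rw [h2] at h; simp [stp] at h; omega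

lemma osc (π π' : Measure E) [IsProbabilityMeasure π] [IsProbabilityMeasure π']
    (hs : π.bind (fun a => P a) = π) (hs' : π'.bind (fun a => P a) = π') (n : ℕ) :
    ∀ (K : ℝ) (g : unitInterval → ℝ), Continuous g →
      (∀ s t, |g s - g t| ≤ K * |(s : ℝ) - t|) →
      |∫ z, g z.1 ∂π - ∫ z, g z.1 ∂π'| ≤ K * (1 / 4) ^ n := by
  induction n with
  | zero =>
    intro K g hg hK
    have hK0 : 0 ≤ K := by
      have := hK 0 1
      simp at this
      exact (abs_nonneg _).trans this
    have hb : ∀ s, |g s - g 0| ≤ K := fun s => by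
      refine (hK s 0).trans ?_
      have h1 : |(s : ℝ) - ((0 : unitInterval) : ℝ)| ≤ 1 := by
        rw [abs_le]; have := s.2.1; have := s.2.2
        simp only [Set.Icc.coe_zero]
        constructor <;> linarith
      nlinarith
    have hlow : ∃ m : unitInterval, ∀ s, g m ≤ g s := by
      obtain ⟨m, -, hm⟩ := isCompact_univ.exists_isMinOn Set.univ_nonempty hg.continuousOn
      exact ⟨m, fun s => hm (Set.mem_univ s)⟩
    obtain ⟨m, hm⟩ := hlow
    have hup : ∀ s, g s ≤ g m + K := fun s => by
      have h := (le_abs_self _).trans (hK s m)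
      have h1 : |(s : ℝ) - (m : ℝ)| ≤ 1 := by
        rw [abs_le]; have := s.2.1; have := s.2.2; have := m.2.1; have := m.2.2
        constructor <;> linarith
      nlinarith
    have hint : ∀ ρ : Measure E, IsProbabilityMeasure ρ →
        g m ≤ ∫ z, g z.1 ∂ρ ∧ ∫ z, g z.1 ∂ρ ≤ g m + K := by
      intro ρ _
      have hi : Integrable (fun z : E => g z.1) ρ :=
        Integrable.of_bound (hg.comp cont_fst).aestronglyMeasurable (|g m| + K)
          (ae_of_all _ fun z => by
            rw [Real.norm_eq_abs, abs_le]
            have h1 := hm z.1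
            have h2 := hup z.1
            have h3 := neg_abs_le (g m)
            have h4 := le_abs_self (g m)
            constructor <;> linarith)
      constructor
      · have := integral_mono (μ := ρ) (integrable_const (g m)) hi (fun z => hm z.1)
        simpa using this
      · have := integral_mono (μ := ρ) hi (integrable_const (g m + K)) (fun z => hup z.1)
        simpa using this
    have h1 := hint π inferInstance
    have h2 := hint π' inferInstance
    rw [pow_zero, mul_one, abs_le]
    constructor <;> linarith [h1.1, h1.2, h2.1, h2.2]
  | succ n ih =>
    intro K g hg hK
    obtain ⟨C, hC⟩ : ∃ C, ∀ s, ‖g s‖ ≤ C := by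
      obtain ⟨C, hC⟩ := isCompact_univ.exists_bound_of_continuousOn hg.continuousOn
      exact ⟨C, fun s => hC s (Set.mem_univ s)⟩
    have e : ∀ ρ : Measure E, IsProbabilityMeasure ρ → ρ.bind (fun a => P a) = ρ →
        ∫ z, g z.1 ∂ρ = ∫ z, (fun s => (1 / 4) * ∑ j, g (ctr s j)) z.1 ∂ρ := by
      intro ρ _ hρ
      have := integral_stat ρ (fun z => g z.1) (hg.comp cont_fst) C (fun z => hC z.1)
      rw [hρ] at this
      exact this
    rw [e π inferInstance hs, e π' inferInstance hs']
    refine (ih (K / 4) (fun s => (1 / 4) * ∑ j, g (ctr s j)) ?_ ?_).trans (le_of_eq ?_)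
    · exact continuous_const.mul (continuous_finsetSum _ fun j _ => hg.comp (cont_ctr j))
    · intro s t
      rw [← mul_sub, ← Finset.sum_sub_distrib, abs_mul]
      have : |∑ j, (g (ctr s j) - g (ctr t j))| ≤ ∑ j : Fin 4, K / 4 * |(s : ℝ) - t| := by
        refine (Finset.abs_sum_le_sum_abs _ _).trans (Finset.sum_le_sum fun j _ => ?_)
        refine (hK _ _).trans (le_of_eq ?_)
        rw [ctr_coe, ctr_coe, ← sub_div, abs_div, abs_of_pos (by norm_num : (0 : ℝ) < 4)]
        rw [add_sub_add_right_eq_sub]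
        ring
      simp only [Finset.sum_const, Finset.card_univ, Fintype.card_fin, nsmul_eq_mul] at this
      rw [abs_of_pos (by norm_num : (0 : ℝ) < 1 / 4)]
      push_cast at this
      linarith
    · rw [pow_succ]; ring

lemma pi0_unique (π' : Measure E) (hp : IsProbabilityMeasure π')
    (hs : π'.bind (fun a => P a) = π') : π' = pi0 := by
  have hmap : ∀ ρ : Measure E, IsProbabilityMeasure ρ →
    IsProbabilityMeasure (ρ.map fun z => z.1) := fun ρ _ =>
      Measure.isProbabilityMeasure_map meas_fst.aemeasurable
  have hfst : π'.map (fun z => z.1) = pi0.map (fun z => z.1) := by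
    let a : ProbabilityMeasure unitInterval := ⟨π'.map (fun z => z.1), hmap _ hp⟩
    let b : ProbabilityMeasure unitInterval := ⟨pi0.map (fun z => z.1), hmap _ inferInstance⟩
    have ht : Tendsto (fun _ : ℕ => a) atTop (𝓝 b) := by
      rw [tendsto_iff_forall_lipschitz_integral_tendsto]
      rintro f - ⟨L, hL⟩
      have : ∫ s, f s ∂(a : Measure unitInterval) = ∫ s, f s ∂(b : Measure unitInterval) := by
        change ∫ s, f s ∂(π'.map (fun z => z.1)) = ∫ s, f s ∂(pi0.map (fun z => z.1))
        rw [integral_map meas_fst.aemeasurable hL.continuous.aestronglyMeasurable,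
          integral_map meas_fst.aemeasurable hL.continuous.aestronglyMeasurable]
        have hb : ∀ n : ℕ, |∫ z, f z.1 ∂π' - ∫ z, f z.1 ∂pi0| ≤ L * (1 / 4) ^ n := fun n =>
          osc π' pi0 hs pi0_stat n L f hL.continuous (fun s t => hL.dist_le_mul s t)
        have ht : Tendsto (fun n : ℕ => (L : ℝ) * (1 / 4) ^ n) atTop (𝓝 (L * 0)) :=
          (tendsto_pow_atTop_nhds_zero_of_lt_one (by norm_num) (by norm_num)).const_mul _
        rw [mul_zero] at ht
        have := ge_of_tendsto' ht hb
        exact sub_eq_zero.1 (abs_eq_zero.1 (le_antisymm this (abs_nonneg _)))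
      rw [this]
      exact tendsto_const_nhds
    have hab : a = b := tendsto_nhds_unique tendsto_const_nhds ht
    exact congrArg Subtype.val hab
  have hrec : ∀ ρ : Measure E, IsProbabilityMeasure ρ → ρ.bind (fun a => P a) = ρ →
      ρ = (ρ.map fun z => z.1).map emb := by
    intro ρ _ hρ
    rw [Measure.map_map cont_emb.measurable meas_fst]
    have hae : ∀ᵐ z ∂ρ, ∀ k : ℕ, z.2 ≠ k + 1 := by
      rw [ae_all_iff]
      intro k
      rw [ae_iff]
      simpa using level_null ρ hρ k
    have : (emb ∘ fun z : E => z.1) =ᵐ[ρ] id := by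
      filter_upwards [hae] with z hz
      have h0 : z.2 = 0 := by
        cases h : z.2 with
        | zero => rfl
        | succ m => exact absurd h (hz m)
      exact Prod.ext rfl h0.symm
    rw [Measure.map_congr this, Measure.map_id]
  rw [hrec π' hp hs, hfst, ← hrec pi0 inferInstance pi0_stat]

/-! ### Failure of weak convergence -/

/-- Bad starting point. -/
def y0 : E := (0, 1)

lemma kpow_level (n : ℕ) : kpow P n y0 {z | z.2 = 0} = 0 := by
  have hm : MeasurableSet {z : E | z.2 = 0} := meas_snd (measurableSet_singleton 0)
  induction n with
  | zero =>
    simp only [kpow]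
    rw [Kernel.id_apply, Measure.dirac_apply' _ hm]
    have h : y0 ∉ {z : E | z.2 = 0} := fun h => one_ne_zero (α := ℕ) h
    simp [h]
  | succ n ih =>
    simp only [kpow]
    rw [Kernel.comp_apply' _ _ _ hm, lintegral_eq_zero_iff (P.measurable_coe hm)]
    have : ∀ᵐ z ∂(kpow P n y0), z.2 ≠ 0 := by
      rw [ae_iff]; simpa using ih
    filter_upwards [this] with z hz
    rw [P_apply, Measure.map_apply (measF meas_F z) hm]
    have : F z ⁻¹' {w | w.2 = 0} = ∅ := by
      ext j
      cases h : z.2 with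
      | zero => exact absurd h hz
      | succ m => simp [F, stp, h]
    rw [this, measure_empty]
    rfl

/-- Indicator of level zero. -/
noncomputable def tst : BoundedContinuousFunction E ℝ :=
  BoundedContinuousFunction.ofNormedAddCommGroup (fun z : E => if z.2 = 0 then (1 : ℝ) else 0)
    ((continuous_of_discreteTopology (f := fun k : ℕ => if k = 0 then (1 : ℝ) else 0)).comp
      cont_snd) 1 (fun z => by split_ifs <;> simp)

lemma tst_apply (z : E) : tst z = if z.2 = 0 then (1 : ℝ) else 0 := rfl

lemma not_conv : ¬ ∀ g : BoundedContinuousFunction E ℝ,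
    Tendsto (fun n => ∫ z, g z ∂(kpow P n y0)) atTop
      (nhds (∫ z, g z ∂pi0)) := by
  intro h
  have h1 := h tst
  have e0 : ∀ n, ∫ z, tst z ∂(kpow P n y0) = 0 := by
    intro n
    have : ∀ᵐ z ∂(kpow P n y0), z.2 ≠ 0 := by
      rw [ae_iff]; simpa using kpow_level n
    refine integral_eq_zero_of_ae ?_
    filter_upwards [this] with z hz
    simp [tst_apply, hz]
  have e1 : ∫ z, tst z ∂pi0 = 1 := by
    unfold pi0
    rw [integral_map cont_emb.measurable.aemeasurable tst.continuous.aestronglyMeasurable]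
    have : ∀ s, tst (emb s) = 1 := fun s => (tst_apply (emb s)).trans (if_pos rfl)
    simp [this]
  simp only [e0, e1] at h1
  exact zero_ne_one (tendsto_nhds_unique tendsto_const_nhds h1)

end Counter

/-- Theorem 3.4 vi: there exist an ordered Polish space `E` and a monotone
Markov kernel `P` on it such that `M` is achievable and `P` has a (necessarily unique)
stationary distribution `π`, yet for some `y` the laws of `Xₙʸ` do not converge weakly
to `π`. -/
theorem stmt12 :
    ∃ (E : Type) (_ : MetricSpace E) (_ : PolishSpace E) (_ : MeasurableSpace E)
      (_ : BorelSpace E) (_ : PartialOrder E) (_ : OrderClosedTopology E)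
      (P : Kernel E E) (_ : IsMarkovKernel P) (π : Measure E),
      MonotoneKernel P ∧ Achievable P {p : E × E | p.1 ≤ p.2} ∧
      IsProbabilityMeasure π ∧ π.bind (fun a => P a) = π ∧
      (∀ π' : Measure E, IsProbabilityMeasure π' → π'.bind (fun a => P a) = π' → π' = π) ∧
      ∃ y : E, ¬ ∀ g : BoundedContinuousFunction E ℝ,
        Tendsto (fun n => ∫ z, g z ∂(kpow P n y)) atTop (nhds (∫ z, g z ∂π)) := by

  exact ⟨Counter.E, inferInstance, inferInstance, inferInstance, inferInstance, inferInstance,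
    inferInstance, Counter.P, inferInstance, Counter.pi0, Counter.P_mono, Counter.P_ach,
    inferInstance, Counter.pi0_stat, Counter.pi0_unique, _, Counter.not_conv⟩
end
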